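/- arXiv:math/0309313 — 2 statements merged into one kernel-verified Lean document; each statement's English description precedes it below -/
import Mathlib

section
/- There exists a finite solvable group of derived length exactly 7 whose composition length equals 13. -/
/-!
The group is `G = P ⋊ (E ⋊ SL(2, 3))`, of order `7 ^ 6 * 27 * 24 = 2 ^ 3 * 3 ^ 4 * 7 ^ 6`, where `E` is
the extraspecial group of order 27 and exponent 3 and `P` is the free group of class two, exponent 7
and rank 3. `SL(2, 3)` acts on `E` through the symplectic plane `E / Z(E)`, and the Weil
representation makes `E ⋊ SL(2, 3)` a subgroup of `GL(3, 7)` (the cube roots of unity lie in `𝔽₇`);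
it therefore acts on `P`, whose layers are `V = 𝔽₇³` and `Λ²V`. Taking the cross product as the
bilinear map `V × V → Λ²V`, a matrix acts on the second layer by its cofactor matrix.

Derived length at most 7: `SL(2, 3) > Q₈ > {±1} > 1` contributes 3, and the class-two groups `E` and
`P` contribute 2 each (`derivedSeries_extension_eq_bot`).

Derived length at least 7: `-1 ∈ SL(2, 3)^{(2)}`. It inverts `E / Z(E)`, so the elements `(v, 0)` of
`E` are commutators with `-1` and lie in the third derived subgroup (`Hess.inl_mem`); their
commutators put `Z(E)` in the fourth (`zeta_mem`). A generator of `Z(E)` acts by the scalars `2` and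
`4` on the two layers of `P`, without nonzero fixed vectors, so `P` lies in the fifth derived
subgroup (`Tower.inl_mem`), and `[P, P] ≠ 1` in the sixth.

The relations of the Weil representation are finite identities between explicit matrix entries and
are checked by evaluation.
-/

/-- `SolvableGroupData G d n` says that `G` is a finite solvable group of derived
length exactly `d` and composition length (= Ω of its order) equal to `n`. -/
def SolvableGroupData (G : Type) [Group G] (d n : ℕ) : Prop :=
  Finite G ∧ IsSolvable G ∧ derivedSeries G d = ⊥ ∧ derivedSeries G (d - 1) ≠ ⊥ ∧
    (Nat.card G).primeFactorsList.length = n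

open Matrix
open scoped commutatorElement

/-! ### Derived series of extensions -/

/-- Derived lengths add along an extension: `N → G → K`, exact at `G`. -/
theorem derivedSeries_extension_eq_bot {N G K : Type*} [Group N] [Group G] [Group K]
    (i : N →* G) (f : G →* K) (hker : f.ker ≤ i.range) {m n : ℕ}
    (hK : derivedSeries K m = ⊥) (hN : derivedSeries N n = ⊥) :
    derivedSeries G (m + n) = ⊥ := by
  have key : ∀ k, derivedSeries G (m + k) ≤ (derivedSeries N k).map i := by
    intro k
    induction k with
    | zero =>
      have h := map_derivedSeries_le_derivedSeries f m
      rw [hK, le_bot_iff, Subgroup.map_eq_bot_iff] at h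
      simpa [MonoidHom.range_eq_map] using h.trans hker
    | succ k ih =>
      rw [← add_assoc, derivedSeries_succ, derivedSeries_succ, Subgroup.map_commutator]
      exact Subgroup.commutator_mono ih ih
  have h := key n
  rwa [hN, Subgroup.map_bot, le_bot_iff] at h

theorem derivedSeries_one_eq_bot_of_comm (A : Type*) [CommGroup A] : derivedSeries A 1 = ⊥ := by
  rw [derivedSeries_one, commutator_eq_bot_iff_center_eq_top]
  exact CommGroup.center_eq_top

theorem commutatorElement_mem_derivedSeries {G : Type*} [Group G] {n : ℕ} {x y : G}
    (hx : x ∈ derivedSeries G n) (hy : y ∈ derivedSeries G n) :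
    ⁅x, y⁆ ∈ derivedSeries G (n + 1) :=
  Subgroup.commutator_mem_commutator hx hy

/-! ### Groups of class two attached to bilinear maps -/

/-- The central extension of `V` by `W` defined by a bilinear map `β : V × V → W` taken as a
2-cocycle: pairs with `(v, a) (w, b) = (v + w, a + b + β v w)`. -/
@[ext]
structure BilinGroup {R V W : Type*} [CommRing R] [AddCommGroup V] [AddCommGroup W] [Module R V]
    [Module R W] (β : V →ₗ[R] V →ₗ[R] W) where
  /-- The component in the quotient `V`. -/
  base : V
  /-- The component in the central subgroup `W`. -/
  cen : W

namespace BilinGroup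

variable {R V W : Type*} [CommRing R] [AddCommGroup V] [AddCommGroup W] [Module R V]
    [Module R W] {β : V →ₗ[R] V →ₗ[R] W}

instance : Mul (BilinGroup β) := ⟨fun p q => ⟨p.base + q.base, p.cen + q.cen + β p.base q.base⟩⟩
instance : One (BilinGroup β) := ⟨⟨0, 0⟩⟩
instance : Inv (BilinGroup β) := ⟨fun p => ⟨-p.base, -p.cen + β p.base p.base⟩⟩

@[simp] theorem mul_base (p q : BilinGroup β) : (p * q).base = p.base + q.base := rfl
@[simp] theorem mul_cen (p q : BilinGroup β) :
    (p * q).cen = p.cen + q.cen + β p.base q.base := rfl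
@[simp] theorem one_base : (1 : BilinGroup β).base = 0 := rfl
@[simp] theorem one_cen : (1 : BilinGroup β).cen = 0 := rfl
@[simp] theorem inv_base (p : BilinGroup β) : p⁻¹.base = -p.base := rfl
@[simp] theorem inv_cen (p : BilinGroup β) : p⁻¹.cen = -p.cen + β p.base p.base := rfl

instance : Group (BilinGroup β) :=
  Group.ofLeftAxioms
    (fun p q r => by ext <;> simp [add_assoc]; abel)
    (fun p => by ext <;> simp)
    (fun p => by ext <;> simp)

theorem derivedSeries_two (β : V →ₗ[R] V →ₗ[R] W) : derivedSeries (BilinGroup β) 2 = ⊥ := by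
  let i : Multiplicative W →* BilinGroup β :=
    { toFun := fun w => ⟨0, w.toAdd⟩, map_one' := rfl, map_mul' := fun a b => by ext <;> simp }
  let f : BilinGroup β →* Multiplicative V :=
    { toFun := fun p => Multiplicative.ofAdd p.base, map_one' := rfl, map_mul' := fun a b => rfl }
  refine derivedSeries_extension_eq_bot i f ?_ (derivedSeries_one_eq_bot_of_comm _)
    (derivedSeries_one_eq_bot_of_comm _)
  intro p hp
  have hp' : p.base = 0 := hp
  exact ⟨Multiplicative.ofAdd p.cen, BilinGroup.ext hp'.symm rfl⟩

/-- The underlying set is `V × W`. -/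
def equivProd (β : V →ₗ[R] V →ₗ[R] W) : BilinGroup β ≃ V × W where
  toFun p := (p.base, p.cen)
  invFun q := ⟨q.1, q.2⟩
  left_inv _ := rfl
  right_inv _ := rfl

end BilinGroup

/-! ### The group `SL(2, 3)` -/

/-- `SL(2, 3)`. -/
abbrev SL23 : Type := SpecialLinearGroup (Fin 2) (ZMod 3)

theorem SL23.mul_entry (g h : SL23) (i j : Fin 2) :
    (g * h).1 i j = g.1 i 0 * h.1 0 j + g.1 i 1 * h.1 1 j := by
  change (g.1 * h.1) i j = _
  rw [Matrix.mul_apply, Fin.sum_univ_two]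

theorem SL23.det_eq (g : SL23) : g.1 0 0 * g.1 1 1 - g.1 0 1 * g.1 1 0 = 1 := by
  rw [← Matrix.det_fin_two]; exact g.2

/-- Elements of `SL(2, 3)` are quadruples `(a, b, c, d)` with `a d - b c = 1`. -/
def SL23.equivQuad :
    SL23 ≃ {q : ZMod 3 × ZMod 3 × ZMod 3 × ZMod 3 // q.1 * q.2.2.2 - q.2.1 * q.2.2.1 = 1} where
  toFun g := ⟨(g.1 0 0, g.1 0 1, g.1 1 0, g.1 1 1), g.det_eq⟩
  invFun q := ⟨!![q.1.1, q.1.2.1; q.1.2.2.1, q.1.2.2.2], by rw [Matrix.det_fin_two_of]; exact q.2⟩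
  left_inv g := Subtype.ext (Matrix.eta_fin_two g.1).symm
  right_inv q := by simp

theorem SL23.card : Nat.card SL23 = 24 := by
  rw [Nat.card_congr SL23.equivQuad, Nat.card_eq_fintype_card]
  decide +kernel

/-- The quaternion subgroup of `SL(2, 3)`: the elements `±1` (the only diagonal ones) and the six
elements of trace zero. -/
def quatSubgroup : Subgroup SL23 where
  carrier := {g | g.1 0 0 + g.1 1 1 = 0 ∨ g.1 0 1 = 0 ∧ g.1 1 0 = 0}
  one_mem' := by right; simp
  mul_mem' := by
    have key : ∀ a b c d : ZMod 3, a * d - b * c = 1 → (a + d = 0 ∨ b = 0 ∧ c = 0) →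
        ∀ a' b' c' d' : ZMod 3, a' * d' - b' * c' = 1 → (a' + d' = 0 ∨ b' = 0 ∧ c' = 0) →
        (a * a' + b * c' + (c * b' + d * d') = 0 ∨ a * b' + b * d' = 0 ∧ c * a' + d * c' = 0) := by
      decide +kernel
    intro g h hg hh
    simpa [Matrix.mul_apply, Fin.sum_univ_two] using
      key _ _ _ _ g.det_eq hg _ _ _ _ h.det_eq hh
  inv_mem' := by
    intro g hg
    simpa [SpecialLinearGroup.coe_inv, Matrix.adjugate_fin_two, add_comm] using hg

/-- The centre `±1` of `SL(2, 3)`, as the subgroup of diagonal elements. -/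
def diagSubgroup : Subgroup SL23 where
  carrier := {g | g.1 0 1 = 0 ∧ g.1 1 0 = 0}
  one_mem' := by simp
  mul_mem' := by
    rintro g h ⟨hg, hg'⟩ ⟨hh, hh'⟩
    simp [Matrix.mul_apply, Fin.sum_univ_two, *]
  inv_mem' := by
    intro g hg
    simpa [SpecialLinearGroup.coe_inv, Matrix.adjugate_fin_two] using hg

/-- The entries of `⁅g, h⁆ = (g * h) * (h * g)⁻¹` in terms of those of `g * h` and `h * g`. -/
theorem SL23.commutator_entries (g h : SL23) :
    (⁅g, h⁆).1 = (g * h).1 * !![(h * g).1 1 1, -(h * g).1 0 1; -(h * g).1 1 0, (h * g).1 0 0] := by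
  rw [commutatorElement_def, mul_assoc, ← _root_.mul_inv_rev]
  exact congrArg ((g * h).1 * ·) (Matrix.adjugate_fin_two (h * g).1)

theorem SL23.commutator_mem_quatSubgroup (g h : SL23) : ⁅g, h⁆ ∈ quatSubgroup := by
  have key : ∀ a b c d : ZMod 3, a * d - b * c = 1 →
      ∀ a' b' c' d' : ZMod 3, a' * d' - b' * c' = 1 →
      (a * a' + b * c') * (c' * b + d' * d) + (a * b' + b * d') * -(c' * a + d' * c)
        + ((c * a' + d * c') * -(a' * b + b' * d) + (c * b' + d * d') * (a' * a + b' * c)) = 0 ∨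
      ((a * a' + b * c') * -(a' * b + b' * d) + (a * b' + b * d') * (a' * a + b' * c) = 0 ∧
        (c * a' + d * c') * (c' * b + d' * d) + (c * b' + d * d') * -(c' * a + d' * c) = 0) := by
    decide +kernel
  have := key _ _ _ _ g.det_eq _ _ _ _ h.det_eq
  change (⁅g, h⁆).1 0 0 + (⁅g, h⁆).1 1 1 = 0 ∨ (⁅g, h⁆).1 0 1 = 0 ∧ (⁅g, h⁆).1 1 0 = 0
  rw [SL23.commutator_entries]
  simpa [Matrix.mul_apply, Fin.sum_univ_two, SL23.mul_entry] using this

set_option synthInstance.maxSize 1000 in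
set_option synthInstance.maxHeartbeats 200000 in
theorem SL23.commutator_mem_diagSubgroup {g h : SL23} (hg : g ∈ quatSubgroup)
    (hh : h ∈ quatSubgroup) : ⁅g, h⁆ ∈ diagSubgroup := by
  have key : ∀ a b c d : ZMod 3, a * d - b * c = 1 → (a + d = 0 ∨ b = 0 ∧ c = 0) →
      ∀ a' b' c' d' : ZMod 3, a' * d' - b' * c' = 1 → (a' + d' = 0 ∨ b' = 0 ∧ c' = 0) →
      ((a * a' + b * c') * -(a' * b + b' * d) + (a * b' + b * d') * (a' * a + b' * c) = 0 ∧
        (c * a' + d * c') * (c' * b + d' * d) + (c * b' + d * d') * -(c' * a + d' * c) = 0) := by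
    decide +kernel
  have := key _ _ _ _ g.det_eq hg _ _ _ _ h.det_eq hh
  change (⁅g, h⁆).1 0 1 = 0 ∧ (⁅g, h⁆).1 1 0 = 0
  rw [SL23.commutator_entries]
  simpa [Matrix.mul_apply, Fin.sum_univ_two, SL23.mul_entry] using this

theorem SL23.derivedSeries_three : derivedSeries SL23 3 = ⊥ := by
  have h1 : derivedSeries SL23 1 ≤ quatSubgroup := by
    rw [derivedSeries_succ, Subgroup.commutator_le]
    exact fun g _ h _ => SL23.commutator_mem_quatSubgroup g h
  have h2 : derivedSeries SL23 2 ≤ diagSubgroup := by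
    rw [derivedSeries_succ, Subgroup.commutator_le]
    exact fun g hg h hh => SL23.commutator_mem_diagSubgroup (h1 hg) (h1 hh)
  rw [derivedSeries_succ, ← le_bot_iff, Subgroup.commutator_le]
  intro g hg h hh
  obtain ⟨hg1, hg2⟩ := h2 hg
  obtain ⟨hh1, hh2⟩ := h2 hh
  rw [Subgroup.mem_bot, commutatorElement_eq_one_iff_mul_comm]
  ext i j
  fin_cases i <;> fin_cases j <;>
    simp [Matrix.mul_apply, Fin.sum_univ_two, hg1, hg2, hh1, hh2, mul_comm]

/-! ### The extraspecial group of order 27 and its extension by `SL(2, 3)` -/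

/-- The determinant form on the plane over `𝔽₃`. -/
def detForm : (Fin 2 → ZMod 3) →ₗ[ZMod 3] (Fin 2 → ZMod 3) →ₗ[ZMod 3] ZMod 3 :=
  LinearMap.mk₂ (ZMod 3) (fun v w => v 0 * w 1 - v 1 * w 0)
    (fun _ _ _ => by simp; ring) (fun _ _ _ => by simp; ring)
    (fun _ _ _ => by simp; ring) (fun _ _ _ => by simp; ring)

@[simp] theorem detForm_apply (v w : Fin 2 → ZMod 3) :
    detForm v w = v 0 * w 1 - v 1 * w 0 := rfl

/-- The extraspecial group of order 27 and exponent 3. -/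
abbrev Heis3 : Type := BilinGroup detForm

theorem detForm_mulVec (g : SL23) (v w : Fin 2 → ZMod 3) :
    detForm (g.1 *ᵥ v) (g.1 *ᵥ w) = detForm v w := by
  have h := g.det_eq
  simp only [detForm_apply, Matrix.mulVec, dotProduct, Fin.sum_univ_two]
  linear_combination (v 0 * w 1 - v 1 * w 0) * h

/-- `SL(2, 3)` acts on the extraspecial group, trivially on its centre. -/
instance : SMul SL23 Heis3 := ⟨fun g p => ⟨g.1 *ᵥ p.base, p.cen⟩⟩

@[simp] theorem SL23.smul_base (g : SL23) (p : Heis3) : (g • p).base = g.1 *ᵥ p.base := rfl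
@[simp] theorem SL23.smul_cen (g : SL23) (p : Heis3) : (g • p).cen = p.cen := rfl

instance : MulDistribMulAction SL23 Heis3 where
  one_smul p := BilinGroup.ext
    (by change (1 : Matrix (Fin 2) (Fin 2) (ZMod 3)) *ᵥ p.base = _
        exact one_mulVec _) rfl
  mul_smul g h p := BilinGroup.ext
    (by exact (mulVec_mulVec p.base g.1 h.1).symm) rfl
  smul_mul g p q := BilinGroup.ext
    (by simp only [SL23.smul_base, BilinGroup.mul_base, mulVec_add])
    (by simp only [SL23.smul_base, SL23.smul_cen, BilinGroup.mul_cen, detForm_mulVec])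
  smul_one g := BilinGroup.ext (by rw [SL23.smul_base, BilinGroup.one_base, mulVec_zero]) rfl

/-- The Hessian-type group `3^{1+2} : SL(2, 3)` of order 648. -/
abbrev Hess : Type := Heis3 ⋊[MulDistribMulAction.toMulAut SL23 Heis3] SL23

/-! ### The Weil representation over `𝔽₇` -/

/-- The additive character of `𝔽₃` with values in the cube roots of unity `1, 2, 4` of `𝔽₇`. -/
def weilChar (t : ZMod 3) : ZMod 7 := if t = 0 then 1 else if t = 1 then 2 else 4

/-- The quadratic character of `𝔽₃`, with values in `𝔽₇`. -/
def quadChar (t : ZMod 3) : ZMod 7 := if t = 0 then 0 else if t = 1 then 1 else -1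

/-- A matrix index read as an element of `𝔽₃`. -/
def ix (i : Fin 3) : ZMod 3 := i

/-- Matrix entries of the Heisenberg operators: translation by `x` composed with modulation by
`y`, normalised so that the cocycle is the determinant form. -/
def heisEntry (x y : ZMod 3) (i j : Fin 3) : ZMod 7 :=
  if ix i = ix j + x then weilChar (y * ix j - x * y) else 0

/-- Matrix entries of the Weil operator of `(a, b; c, d)`. The constant `4` is the inverse of the
quadratic Gauss sum `∑ t, weilChar (t ^ 2) = 5` up to the sign that makes the projective
representation linear. -/
def weilEntry (a b c d : ZMod 3) (i j : Fin 3) : ZMod 7 :=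
  if b = 0 then if ix i = a * ix j then quadChar a * weilChar (-(c * d * ix i * ix i)) else 0
  else 4 * quadChar b * weilChar (-(b * (d * ix i * ix i + ix i * ix j + a * ix j * ix j)))

theorem weilChar_add : ∀ s t, weilChar (s + t) = weilChar s * weilChar t := by decide

theorem heisEntry_mul : ∀ (x y x' y' : ZMod 3) (i j : Fin 3),
    heisEntry x y i 0 * heisEntry x' y' 0 j + heisEntry x y i 1 * heisEntry x' y' 1 j
      + heisEntry x y i 2 * heisEntry x' y' 2 j =
    weilChar (x * y' - y * x') * heisEntry (x + x') (y + y') i j := by decide +kernel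

theorem weilEntry_heisEntry : ∀ a b c d : ZMod 3, a * d - b * c = 1 →
    ∀ (x y : ZMod 3) (i j : Fin 3),
    weilEntry a b c d i 0 * heisEntry x y 0 j + weilEntry a b c d i 1 * heisEntry x y 1 j
      + weilEntry a b c d i 2 * heisEntry x y 2 j =
    heisEntry (a * x + b * y) (c * x + d * y) i 0 * weilEntry a b c d 0 j
      + heisEntry (a * x + b * y) (c * x + d * y) i 1 * weilEntry a b c d 1 j
      + heisEntry (a * x + b * y) (c * x + d * y) i 2 * weilEntry a b c d 2 j := by
  decide +kernel

theorem weilEntry_mul : ∀ a b c d : ZMod 3, a * d - b * c = 1 →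
    ∀ a' b' c' d' : ZMod 3, a' * d' - b' * c' = 1 → ∀ i j : Fin 3,
    weilEntry a b c d i 0 * weilEntry a' b' c' d' 0 j
      + weilEntry a b c d i 1 * weilEntry a' b' c' d' 1 j
      + weilEntry a b c d i 2 * weilEntry a' b' c' d' 2 j =
    weilEntry (a * a' + b * c') (a * b' + b * d') (c * a' + d * c') (c * b' + d * d') i j := by
  decide +kernel

/-- The 3-dimensional representation of the extraspecial group (Schrödinger model). -/
def heisMat (p : Heis3) : Matrix (Fin 3) (Fin 3) (ZMod 7) :=
  weilChar p.cen • Matrix.of (heisEntry (p.base 0) (p.base 1))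

/-- The Weil representation of `SL(2, 3)`. -/
def weilMat (g : SL23) : Matrix (Fin 3) (Fin 3) (ZMod 7) :=
  Matrix.of (weilEntry (g.1 0 0) (g.1 0 1) (g.1 1 0) (g.1 1 1))

theorem heisMat_mul (p q : Heis3) : heisMat (p * q) = heisMat p * heisMat q := by
  ext i j
  have h := heisEntry_mul (p.base 0) (p.base 1) (q.base 0) (q.base 1) i j
  simp only [heisMat, Matrix.mul_apply, Fin.sum_univ_three, Matrix.smul_apply, Matrix.of_apply,
    smul_eq_mul, BilinGroup.mul_base, BilinGroup.mul_cen, weilChar_add, detForm_apply,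
    Pi.add_apply]
  linear_combination (-(weilChar p.cen * weilChar q.cen)) * h

theorem weilMat_mul (g h : SL23) : weilMat (g * h) = weilMat g * weilMat h := by
  ext i j
  have key := weilEntry_mul _ _ _ _ g.det_eq _ _ _ _ h.det_eq i j
  simp only [weilMat, Matrix.mul_apply, Fin.sum_univ_three, Matrix.of_apply, SL23.mul_entry]
  exact key.symm

theorem weilMat_one : weilMat 1 = 1 := by
  have h : ∀ i j : Fin 3, weilEntry 1 0 0 1 i j = if i = j then 1 else 0 := by
    decide
  ext i j
  simpa [weilMat, Matrix.one_apply] using h i j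

theorem weilMat_mul_heisMat (g : SL23) (p : Heis3) :
    weilMat g * heisMat p = heisMat (g • p) * weilMat g := by
  ext i j
  have key := weilEntry_heisEntry _ _ _ _ g.det_eq (p.base 0) (p.base 1) i j
  simp only [weilMat, heisMat, Matrix.mul_apply, Fin.sum_univ_three, Matrix.smul_apply,
    Matrix.of_apply, smul_eq_mul, SL23.smul_base, SL23.smul_cen, Matrix.mulVec, dotProduct,
    Fin.sum_univ_two]
  linear_combination (weilChar p.cen) * key

/-- The faithful representation of `3^{1+2} : SL(2, 3)` on `𝔽₇³`. -/
def hessRep : Hess →* Matrix (Fin 3) (Fin 3) (ZMod 7) where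
  toFun h := heisMat h.left * weilMat h.right
  map_one' := by
    have h1 : ∀ i j : Fin 3, heisEntry 0 0 i j = if i = j then 1 else 0 := by
      decide
    have h3 : heisMat 1 = 1 := by
      ext i j
      simpa [heisMat, weilChar, Matrix.one_apply] using h1 i j
    simp [h3, weilMat_one]
  map_mul' h k := by
    rw [SemidirectProduct.mul_left, SemidirectProduct.mul_right, heisMat_mul, weilMat_mul,
      MulDistribMulAction.toMulAut_apply, MulDistribMulAction.toMulEquiv_apply]
    calc heisMat h.left * heisMat (h.right • k.left) * (weilMat h.right * weilMat k.right)
        = heisMat h.left * (heisMat (h.right • k.left) * weilMat h.right) * weilMat k.right := by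
          simp only [mul_assoc]
      _ = _ := by rw [← weilMat_mul_heisMat]; simp only [mul_assoc]

/-! ### The group of order `7^6` -/

/-- The free class-two exponent-7 group of rank 3, of order `7 ^ 6`: the exterior square of
`𝔽₇³` is identified with `𝔽₇³` through the cross product. -/
abbrev Free7 : Type := BilinGroup (crossProduct (R := ZMod 7))

theorem cross_mulVec {R : Type*} [CommRing R] (M : Matrix (Fin 3) (Fin 3) R) (v w : Fin 3 → R) :
    crossProduct (M *ᵥ v) (M *ᵥ w) = (adjugate M)ᵀ *ᵥ crossProduct v w := by
  ext i
  fin_cases i <;>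
    simp [cross_apply, Matrix.mulVec, dotProduct, Fin.sum_univ_three, Matrix.adjugate_fin_three] <;>
    ring

/-- Linear maps act on `𝔽₇³` and, through the cofactor matrix, on its exterior square. -/
instance : SMul Hess Free7 :=
  ⟨fun h p => ⟨hessRep h *ᵥ p.base, (adjugate (hessRep h))ᵀ *ᵥ p.cen⟩⟩

@[simp] theorem Hess.smul_base (h : Hess) (p : Free7) :
    (h • p).base = hessRep h *ᵥ p.base := rfl
@[simp] theorem Hess.smul_cen (h : Hess) (p : Free7) :
    (h • p).cen = (adjugate (hessRep h))ᵀ *ᵥ p.cen := rfl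

instance : MulDistribMulAction Hess Free7 where
  one_smul p := BilinGroup.ext
    (by rw [Hess.smul_base, map_one, one_mulVec])
    (by rw [Hess.smul_cen, map_one, adjugate_one, transpose_one, one_mulVec])
  mul_smul g h p := BilinGroup.ext
    (by simp only [Hess.smul_base, map_mul, mulVec_mulVec])
    (by simp only [Hess.smul_cen, map_mul, adjugate_mul_distrib, transpose_mul, mulVec_mulVec])
  smul_mul g p q := BilinGroup.ext
    (by simp only [Hess.smul_base, BilinGroup.mul_base, mulVec_add])
    (by simp only [Hess.smul_base, Hess.smul_cen, BilinGroup.mul_cen, cross_mulVec, mulVec_add])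
  smul_one g := BilinGroup.ext
    (by rw [Hess.smul_base, BilinGroup.one_base, mulVec_zero])
    (by rw [Hess.smul_cen, BilinGroup.one_cen, mulVec_zero])

/-- The group `7^{3+3} : 3^{1+2} : SL(2, 3)`. -/
abbrev Tower : Type := Free7 ⋊[MulDistribMulAction.toMulAut Hess Free7] Hess

theorem Tower.card : Nat.card Tower = 7 ^ 6 * (27 * 24) := by
  rw [SemidirectProduct.card, SemidirectProduct.card, SL23.card,
    Nat.card_congr (BilinGroup.equivProd _), Nat.card_congr (BilinGroup.equivProd _)]
  simp [Nat.card_eq_fintype_card]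

theorem Hess.derivedSeries_five : derivedSeries Hess 5 = ⊥ :=
  derivedSeries_extension_eq_bot SemidirectProduct.inl SemidirectProduct.rightHom
    SemidirectProduct.range_inl_eq_ker_rightHom.ge SL23.derivedSeries_three
    (BilinGroup.derivedSeries_two _)

theorem Tower.derivedSeries_seven : derivedSeries Tower 7 = ⊥ :=
  derivedSeries_extension_eq_bot SemidirectProduct.inl SemidirectProduct.rightHom
    SemidirectProduct.range_inl_eq_ker_rightHom.ge Hess.derivedSeries_five
    (BilinGroup.derivedSeries_two _)

/-! ### The lower bound -/

theorem commutator_inr_inl {N H : Type*} [Group N] [Group H] [MulDistribMulAction H N]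
    (h : H) (n : N) :
    ⁅(SemidirectProduct.inr h : N ⋊[MulDistribMulAction.toMulAut H N] H),
      (SemidirectProduct.inl n : N ⋊[MulDistribMulAction.toMulAut H N] H)⁆ =
      SemidirectProduct.inl (h • n * n⁻¹) := by
  rw [commutatorElement_def, ← map_inv SemidirectProduct.inr, ← SemidirectProduct.inl_aut,
    ← map_inv, ← map_mul]
  rfl

theorem SL23.neg_one_mem : (-1 : SL23) ∈ derivedSeries SL23 2 := by
  let s : SL23 := ⟨!![1, 1; 0, 1], by decide⟩
  let t : SL23 := ⟨!![1, 0; 1, 1], by decide⟩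
  -- Both inner commutators have order 4 and together they generate `Q₈`.
  have h : ⁅⁅s, t⁆, ⁅s⁻¹, t⁆⁆ = -1 := by
    decide +kernel
  rw [← h]
  exact commutatorElement_mem_derivedSeries
    (commutatorElement_mem_derivedSeries (n := 0) trivial trivial)
    (commutatorElement_mem_derivedSeries (n := 0) trivial trivial)

theorem Hess.neg_one_mem : (SemidirectProduct.inr (-1) : Hess) ∈ derivedSeries Hess 2 :=
  map_derivedSeries_le_derivedSeries (SemidirectProduct.inr : SL23 →* Hess) 2
    ⟨_, SL23.neg_one_mem, rfl⟩

/-- Since `-1` inverts `v ∈ 𝔽₃²`, the element `(v, 0)` is its own commutator with `-1`. -/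
theorem Hess.inl_mem (v : Fin 2 → ZMod 3) :
    (SemidirectProduct.inl ⟨v, 0⟩ : Hess) ∈ derivedSeries Hess 3 := by
  have self : ⁅(SemidirectProduct.inr (-1) : Hess), (SemidirectProduct.inl ⟨v, 0⟩ : Hess)⁆
      = SemidirectProduct.inl ⟨v, 0⟩ := by
    rw [commutator_inr_inl]
    congr 1
    have h3 : (3 : ZMod 3) = 0 := rfl
    have hneg : (-1 : SL23).1 *ᵥ v = -v := by
      change (-1 : Matrix (Fin 2) (Fin 2) (ZMod 3)) *ᵥ v = -v
      rw [neg_mulVec, one_mulVec]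
    ext i
    · simp only [BilinGroup.mul_base, SL23.smul_base, BilinGroup.inv_base, hneg, Pi.add_apply,
        Pi.neg_apply]
      linear_combination (-v i) * h3
    · simp [mul_comm]
  have step : ∀ k ≤ 3, (SemidirectProduct.inl ⟨v, 0⟩ : Hess) ∈ derivedSeries Hess k := by
    intro k
    induction k with
    | zero => intro _; trivial
    | succ k ih =>
      intro hk
      rw [← self]
      exact commutatorElement_mem_derivedSeries
        (derivedSeries_antitone Hess (by omega : k ≤ 2) Hess.neg_one_mem) (ih (by omega))
  exact step 3 le_rfl

/-- A generator of the centre of the extraspecial group, which acts on `𝔽₇³` as the scalar `2`. -/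
def zeta : Hess := SemidirectProduct.inl ⟨0, 1⟩

theorem zeta_mem : zeta ∈ derivedSeries Hess 4 := by
  have h : ⁅(SemidirectProduct.inl ⟨![1, 0], 0⟩ : Hess),
      (SemidirectProduct.inl ⟨![0, 2], 0⟩ : Hess)⁆
      = zeta := by
    rw [← map_commutatorElement, zeta]
    congr 1
    ext i
    · fin_cases i <;> simp [commutatorElement_def]
    · simp [commutatorElement_def]
      decide
  rw [← h]
  exact commutatorElement_mem_derivedSeries (Hess.inl_mem _) (Hess.inl_mem _)

theorem hessRep_zeta : hessRep zeta = Matrix.diagonal fun _ => 2 := by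
  have h : ∀ i j : Fin 3, 2 * heisEntry 0 0 i j = if i = j then 2 else 0 := by decide
  have hrep : hessRep zeta = heisMat ⟨0, 1⟩ * weilMat 1 := rfl
  rw [hrep, weilMat_one, mul_one]
  ext i j
  simpa [heisMat, weilChar, Matrix.diagonal_apply] using h i j

/-- `zeta` acts on `𝔽₇³` as `2` and on its exterior square as `4`; as neither eigenvalue is `1`,
every element of the normal 7-subgroup is a commutator with `zeta`. -/
theorem Tower.inl_mem (p : Free7) : (SemidirectProduct.inl p : Tower) ∈ derivedSeries Tower 5 := by
  -- On the central layer the commutator multiplies by `4 - 1 = 3`, whose inverse mod 7 is `5`.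
  have comm : ∀ q : Free7, ⁅(SemidirectProduct.inr zeta : Tower),
      (SemidirectProduct.inl ⟨q.base, (5 : ZMod 7) • q.cen⟩ : Tower)⁆ = SemidirectProduct.inl q := by
    intro q
    rw [commutator_inr_inl]
    congr 1
    have h7 : (7 : ZMod 7) = 0 := rfl
    ext i
    · simp [hessRep_zeta]
      ring
    · simp only [BilinGroup.mul_cen, Hess.smul_cen, Hess.smul_base, hessRep_zeta,
        BilinGroup.inv_cen, BilinGroup.inv_base, Matrix.adjugate_diagonal]
      fin_cases i <;> simp [cross_apply]
      · linear_combination (2 * q.cen 0) * h7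
      · linear_combination (2 * q.cen 1) * h7
      · linear_combination (2 * q.cen 2) * h7
  have hz : (SemidirectProduct.inr zeta : Tower) ∈ derivedSeries Tower 4 :=
    map_derivedSeries_le_derivedSeries (SemidirectProduct.inr : Hess →* Tower) 4
      ⟨_, zeta_mem, rfl⟩
  have step : ∀ k ≤ 5, ∀ q : Free7,
      (SemidirectProduct.inl q : Tower) ∈ derivedSeries Tower k := by
    intro k
    induction k with
    | zero => intro _ _; trivial
    | succ k ih =>
      intro hk q
      rw [← comm q]
      exact commutatorElement_mem_derivedSeries
        (derivedSeries_antitone Tower (by omega : k ≤ 4) hz) (ih (by omega) _)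
  exact step 5 le_rfl p

theorem Tower.derivedSeries_six_ne_bot : derivedSeries Tower 6 ≠ ⊥ := by
  intro hbot
  have h := commutatorElement_mem_derivedSeries (Tower.inl_mem ⟨![1, 0, 0], 0⟩)
    (Tower.inl_mem ⟨![0, 1, 0], 0⟩)
  rw [hbot, Subgroup.mem_bot, ← map_commutatorElement,
    map_eq_one_iff _ SemidirectProduct.inl_injective] at h
  -- The commutator is `2 (e₁ × e₂) = 2 e₃`, so its third central coordinate is `2`.
  have h2 := congrFun (congrArg BilinGroup.cen h) 2
  revert h2
  simp [commutatorElement_def, cross_apply]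
  decide

/-- There exists a finite solvable group of derived length exactly 7 whose
composition length equals 13. -/
theorem exists_group_derivedLength_7_compLength_13 :
    ∃ (G : Type) (inst : Group G), @SolvableGroupData G inst 7 13 := by
  refine ⟨Tower, inferInstance, ?_, ⟨7, Tower.derivedSeries_seven⟩, Tower.derivedSeries_seven,
    Tower.derivedSeries_six_ne_bot, ?_⟩
  · exact Nat.finite_of_card_ne_zero (by rw [Tower.card]; norm_num)
  · rw [Tower.card]
    have hperm := Nat.primeFactorsList_unique (n := 7 ^ 6 * (27 * 24))
      (l := [2, 2, 2, 3, 3, 3, 3, 7, 7, 7, 7, 7, 7]) (by norm_num) (by norm_num)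
    exact hperm.length_eq.symm
end

section
/- Let p be a prime, let n ∈ {1, 2, 3, 4}, let P be a finite abelian group of order p^n, and let Q be a solvable subgroup of the automorphism group Aut(P). Then the derived length of Q is at most 1 if n = 1, at most 4 if n = 2, at most 5 if n = 3, and at most 6 if n = 4. -/
/-!
It suffices to bound the derived length of a solvable group `G` acting on a finite abelian
`p`-group `V` of order `p ^ n`. If `V` is not elementary abelian, the `p`-torsion `W` and `V ⧸ W`
are smaller, and a group acting trivially on both acts on `V` through an abelian group, which costs
one further step of the derived series (`derivedSeries_le_ker_of_submodule`). If `V` is elementary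
abelian, extend scalars from `ZMod p` to its algebraic closure `K`; what remains is a linear
statement (`derivedSeries_le_ker_linear`): a solvable group acting on a `K`-space of dimension
`n ≤ 4` acts with derived length at most `lengthBound n`, that is `0, 1, 4, 5, 6`.

The linear statement goes by induction on `n`. Because the bound is strictly increasing, a proper
invariant subspace is harmless. If a normal subgroup acts by commuting operators that are not all
scalars, its joint eigenspaces either span a proper invariant subspace or decompose `V` into `r ≥ 2`
blocks permuted by `G`; as the symmetric group on `r ≤ 4` letters has derived length `r - 1` and
each block has dimension at most `n - (r - 1)`, the induction applies to the kernel of the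
permutation action (`derivedSeries_le_ker_step`).

Otherwise every normal subgroup acting commutatively acts by scalars. Let `Z` be the subgroup of
elements acting as scalars. When `G ≠ Z` and `n` is a power of the prime `l`, the last nontrivial
term of the derived series modulo `Z` contains a normal subgroup `E` with `E / (E ∩ Z)` elementary
abelian of exponent `l`, carrying a nondegenerate symplectic form `B` given by commutators
(`exists_symplectic`). Elements `g` of `E` with distinct characters `B g` act by linearly
independent operators, so `E / (E ∩ Z)` has at most `n ^ 2` elements, and when that number is reached only
scalars commute with `E`. In this case a term of the derived series that acts trivially on
`E / (E ∩ Z)` dies after two more steps (`derivedSeries_le_ker_of_centralizer`).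

* For `n = 2`, `G` acts on `E / (E ∩ Z) = 𝔽₂ ^ 2` with derived length at most `2`, total `4`.
* For `n = 3`, `G` acts on `𝔽₃ ^ 2` preserving `B`, hence through `SL(2, 3)`, which has derived
  length `3`, total `5`.
* For `n = 4` and `E / (E ∩ Z) = 𝔽₂ ^ 4`, the action has derived length at most `4`, total `6`.
* For `n = 4` and `E / (E ∩ Z) = 𝔽₂ ^ 2`, the second derived subgroup acts trivially on it, so it
  lies in the central product of `E` with the centralizer `C` of `E` up to the kernel of the action.
  The group `C` preserves the two eigenspaces, both of dimension two, of a noncentral element of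
  `E`, and the case of dimension two gives `2 + 4 = 6`.

That a solvable subgroup of `GL(m, 2)` with `m ≤ 4` has derived length at most `m` is again proved
by the induction above, over the algebraic closure of `𝔽₂` (`derivedSeries_le_ker_char_two`): the
form `B` cannot exist for `l = 2` in characteristic two, and for `l = 3` it forces `27` to divide the
order of the group, whereas `27` does not divide the order of `GL(4, 2)`.
-/

open Module
open scoped commutatorElement

universe u v w

set_option linter.unusedSectionVars false

/-! ### Derived series: general facts, small symmetric groups, block triangular actions -/

theorem derivedSeries_add_le_map {G : Type*} [Group G] {N : Subgroup G} {a : ℕ}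
    (h : derivedSeries G a ≤ N) (b : ℕ) :
    derivedSeries G (a + b) ≤ (derivedSeries N b).map N.subtype := by
  induction b with
  | zero => simpa [← MonoidHom.range_eq_map] using h
  | succ b ih =>
    rw [← add_assoc, derivedSeries_succ, derivedSeries_succ]
    exact Subgroup.commutator_le_map_commutator ih ih

/-- A homomorphism kills the next term of the derived series as soon as the images of the elements
of some subgroup containing the current term commute with each other. -/
theorem derivedSeries_succ_le_of_comm {G M : Type*} [Group G] [Monoid M] (φ : G →* M) {d : ℕ}
    {N : Subgroup G} (h : derivedSeries G d ≤ N)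
    (hN : ∀ g ∈ N, ∀ k ∈ N, φ g * φ k = φ k * φ g) :
    derivedSeries G (d + 1) ≤ φ.ker := by
  rw [derivedSeries_succ, Subgroup.commutator_le]
  intro g hg k hk
  rw [MonoidHom.mem_ker, commutatorElement_def]
  have := hN g (h hg) k (h hk)
  rw [map_mul, map_mul, map_mul, this, mul_assoc (φ k), ← map_mul, mul_inv_cancel, map_one, mul_one,
    ← map_mul, mul_inv_cancel, map_one]

theorem derivedSeries_perm_one_le {X : Type*} [Fintype X] [DecidableEq X] :
    derivedSeries (Equiv.Perm X) 1 ≤ alternatingGroup X :=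
  derivedSeries_succ_le_of_comm Equiv.Perm.sign (d := 0) le_top fun _ _ _ _ => mul_comm _ _

theorem derivedSeries_perm_fin_four {X : Type*} [Finite X] (hX : Nat.card X = 4) :
    derivedSeries (Equiv.Perm X) 3 = ⊥ := by
  classical
  have := Fintype.ofFinite X
  have h1 := derivedSeries_perm_one_le (X := X)
  refine le_bot_iff.1 ((derivedSeries_add_le_map h1 2).trans ?_)
  rw [derivedSeries_succ, derivedSeries_one,
    ← alternatingGroup.kleinFour_eq_commutator hX]
  have hc := (alternatingGroup.kleinFour_isKleinFour hX)
  have : ⁅alternatingGroup.kleinFour X, alternatingGroup.kleinFour X⁆ = ⊥ := by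
    rw [Subgroup.commutator_eq_bot_iff_le_centralizer]
    intro g hg
    rw [Subgroup.mem_centralizer_iff]
    intro k hk
    have hcomm := mul_comm_of_exponent_two hc.exponent_two ⟨k, hk⟩ ⟨g, hg⟩
    exact congrArg Subtype.val hcomm
  rw [this]; simp

theorem derivedSeries_perm_fin_three {X : Type*} [Finite X] (hX : Nat.card X = 3) :
    derivedSeries (Equiv.Perm X) 2 = ⊥ := by
  classical
  have := Fintype.ofFinite X
  have h1 := derivedSeries_perm_one_le (X := X)
  have : Nontrivial X := by
    rw [← Finite.one_lt_card_iff_nontrivial]; omega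
  have hc : Nat.card (alternatingGroup X) = 3 := by
    rw [nat_card_alternatingGroup, hX]; rfl
  have : Fact (Nat.Prime 3) := ⟨Nat.prime_three⟩
  have : IsCyclic (alternatingGroup X) := isCyclic_of_prime_card hc
  have hcomm := (IsCyclic.commGroup (α := alternatingGroup X)).mul_comm
  rw [← le_bot_iff]
  refine (derivedSeries_succ_le_of_comm (MonoidHom.id _) h1 ?_).trans (by simp)
  intro g hg k hk
  exact congrArg Subtype.val (hcomm ⟨g, hg⟩ ⟨k, hk⟩)

theorem derivedSeries_perm {X : Type*} [Finite X] {r : ℕ} (hX : Nat.card X = r) (h1 : 1 ≤ r)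
    (h4 : r ≤ 4) : derivedSeries (Equiv.Perm X) (r - 1) = ⊥ := by
  classical
  have := Fintype.ofFinite X
  interval_cases r
  · have : Subsingleton X := (Finite.card_le_one_iff_subsingleton).1 hX.le
    exact Subsingleton.elim _ _
  · have hc : Nat.card (Equiv.Perm X) = 2 := by
      rw [Nat.card_perm, hX]; rfl
    have : Fact (Nat.Prime 2) := ⟨Nat.prime_two⟩
    have : IsCyclic (Equiv.Perm X) := isCyclic_of_prime_card hc
    have hcomm := (IsCyclic.commGroup (α := Equiv.Perm X)).mul_comm
    rw [← le_bot_iff]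
    exact (derivedSeries_succ_le_of_comm (MonoidHom.id _) le_top
      (fun g _ k _ => hcomm g k) (d := 0)).trans (by simp)
  · exact derivedSeries_perm_fin_three hX
  · exact derivedSeries_perm_fin_four hX

/-- If a term of the derived series acts trivially on an invariant submodule and on the quotient by
it, then it acts by unitriangular block matrices, which commute, so the next term acts trivially. -/
theorem derivedSeries_le_ker_of_submodule {R G V : Type*} [CommRing R] [Group G] [AddCommGroup V]
    [Module R V] (ρ : Representation R G V) (W : Submodule R V) (hW : ∀ g, W ≤ W.comap (ρ g))
    {d : ℕ} (h1 : derivedSeries G d ≤ (ρ.subrepresentation W hW).ker)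
    (h2 : derivedSeries G d ≤ (ρ.quotient W hW).ker) :
    derivedSeries G (d + 1) ≤ ρ.ker := by
  refine derivedSeries_succ_le_of_comm ρ le_rfl ?_
  have k1 : ∀ g ∈ derivedSeries G d, ∀ w ∈ W, ρ g w = w := by
    intro g hg w hw
    have := congrArg (fun φ => (φ ⟨w, hw⟩ : W)) (h1 hg)
    exact congrArg Subtype.val this
  have k2 : ∀ g ∈ derivedSeries G d, ∀ v, ρ g v - v ∈ W := by
    intro g hg v
    have := congrArg (fun φ => φ (W.mkQ v)) (h2 hg)
    exact (Submodule.Quotient.eq W).1 this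
  intro g hg k hk
  ext v
  have e1 := k1 g hg _ (k2 k hk v)
  have e2 := k1 k hk _ (k2 g hg v)
  rw [map_sub, sub_eq_iff_eq_add] at e1 e2
  simp only [Module.End.mul_apply]
  rw [e1, e2]; abel

/-- A set of commuting operators, possibly infinite, has a joint eigenvector: on a minimal nonzero
invariant subspace every operator of the set is a scalar. -/
theorem exists_joint_eigenvector {K V : Type*} [Field K] [IsAlgClosed K] [AddCommGroup V]
    [Module K V] [FiniteDimensional K V] [Nontrivial V] (S : Set (End K V))
    (hS : ∀ s ∈ S, ∀ t ∈ S, Commute s t) :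
    ∃ v : V, v ≠ 0 ∧ ∀ s ∈ S, ∃ μ : K, s v = μ • v := by
  obtain ⟨W, ⟨hW0, hWS⟩, hmin⟩ := WellFounded.has_min (wellFounded_lt (α := Submodule K V))
    {W | W ≠ ⊥ ∧ ∀ s ∈ S, W ≤ W.comap s} ⟨⊤, top_ne_bot, fun s _ => le_top⟩
  obtain ⟨v, hv, hv0⟩ := W.exists_mem_ne_zero_of_ne_bot hW0
  refine ⟨v, hv0, fun s hs => ?_⟩
  have : Nontrivial W := Submodule.nontrivial_iff_ne_bot.2 hW0
  obtain ⟨μ, hμ⟩ := Module.End.exists_eigenvalue (s.restrict (hWS s hs))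
  obtain ⟨w, hw⟩ := hμ.exists_hasEigenvector
  refine ⟨μ, ?_⟩
  by_contra hne
  refine hmin (W ⊓ End.eigenspace s μ) ⟨?_, ?_⟩ ?_
  · rw [Submodule.ne_bot_iff]
    refine ⟨w, ⟨w.2, ?_⟩, fun h => hw.2 (Subtype.ext h)⟩
    rw [SetLike.mem_coe, End.mem_eigenspace_iff]
    exact congrArg Subtype.val hw.apply_eq_smul
  · intro t ht x hx
    refine ⟨hWS t ht hx.1, ?_⟩
    have h2 := hx.2
    rw [SetLike.mem_coe, End.mem_eigenspace_iff] at h2 ⊢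
    rw [← Module.End.mul_apply, (hS s hs t ht).eq, Module.End.mul_apply, h2, map_smul]
  · refine lt_of_le_of_ne inf_le_left fun h => hne ?_
    have : v ∈ W ⊓ End.eigenspace s μ := by rw [h]; exact hv
    exact End.mem_eigenspace_iff.1 this.2

/-! ### Imprimitive and reducible representations -/

/-- In a decomposition into nonzero summands, each of the other summands has dimension at least
one. -/
theorem finrank_le_of_decomposition {K V : Type*} [Field K] [AddCommGroup V]
    [Module K V] [FiniteDimensional K V] {X : Set (Submodule K V)} [Finite X]
    (hind : sSupIndep X) (htop : sSup X = ⊤) (hbot : ⊥ ∉ X) (W : Submodule K V) (hW : W ∈ X) :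
    finrank K W + (Nat.card X - 1) ≤ finrank K V := by
  classical
  have := Fintype.ofFinite X
  have hinternal : DirectSum.IsInternal (fun W : X => (W : Submodule K V)) :=
    DirectSum.isInternal_submodule_of_iSupIndep_of_iSup_eq_top ((sSupIndep_iff X).1 hind)
      (by rw [← htop, sSup_eq_iSup'])
  have e := LinearEquiv.ofBijective (DirectSum.coeLinearMap fun W : X => (W : Submodule K V)) hinternal
  rw [← e.finrank_eq, finrank_directSum,
    ← Finset.add_sum_erase _ _ (Finset.mem_univ (⟨W, hW⟩ : X))]
  refine Nat.add_le_add_left ?_ _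
  calc Nat.card X - 1 = ∑ i ∈ Finset.univ.erase (⟨W, hW⟩ : X), 1 := by
        rw [Finset.sum_const, Finset.card_erase_of_mem (Finset.mem_univ _)]
        simp
    _ ≤ _ := Finset.sum_le_sum fun i _ => by
        rw [Nat.succ_le_iff, finrank_pos_iff, Submodule.nontrivial_iff_ne_bot]
        exact fun h => hbot (h ▸ i.2)

theorem finite_of_sSupIndep {K V : Type*} [Field K] [AddCommGroup V]
    [Module K V] [FiniteDimensional K V] {X : Set (Submodule K V)}
    (hind : sSupIndep X) : Finite X :=
  WellFoundedGT.finite_of_sSupIndep hind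



/-- The induction hypothesis: for every `m < n`, the term `f m` of the derived series of a group
embedding into `G` acts trivially in every representation over `K` of dimension at most `m`.
Embeddings are used instead of subgroups so that the hypothesis passes to subgroups directly. -/
def SmallBound (K : Type w) [Field K] (G : Type u) [Group G] (f : ℕ → ℕ) (n : ℕ) : Prop :=
  ∀ m < n, ∀ (N : Type u) [Group N] (i : N →* G), Function.Injective i →
    ∀ (W : Type v) [AddCommGroup W] [Module K W] [FiniteDimensional K W]
      (σ : Representation K N W), finrank K W ≤ m → derivedSeries N (f m) ≤ σ.ker

section
variable {K : Type w} [Field K] {G : Type u} [Group G] {V : Type v} [AddCommGroup V] [Module K V]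
  [FiniteDimensional K V]

/-- The imprimitive case. `G` permutes `r` blocks, where `2 ≤ r ≤ 4`; after `r - 1` steps the
derived series fixes every block, and blocks have dimension at most `n - (r - 1)`. The sum of the
two bounds is at most `f n` because `f` is strictly increasing. -/
theorem derivedSeries_le_ker_of_decomposition (ρ : Representation K G V) {f : ℕ → ℕ}
    (hf : StrictMono f) {n : ℕ} (hn : n ≤ 4) (hV : finrank K V = n)
    (IH : SmallBound.{u, v, w} K G f n) {X : Set (Submodule K V)}
    (hind : sSupIndep X) (htop : sSup X = ⊤) (hbot : ⊥ ∉ X) (hX : X.Nontrivial)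
    (hperm : ∀ g, ∀ W ∈ X, W.map (ρ g) ∈ X) :
    derivedSeries G (f n) ≤ ρ.ker := by
  classical
  have hfin : Finite X := finite_of_sSupIndep hind
  have hdim := finrank_le_of_decomposition hind htop hbot
  set r := Nat.card X with hr
  have hr2 : 2 ≤ r := by
    have : Nontrivial X := hX.coe_sort
    exact Finite.one_lt_card
  obtain ⟨W0, hW0⟩ := hX.nonempty
  have hrn : r ≤ n := by
    have h1 := hdim W0 hW0
    have : 1 ≤ finrank K W0 := by
      rw [Nat.succ_le_iff, finrank_pos_iff, Submodule.nontrivial_iff_ne_bot]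
      exact fun h => hbot (h ▸ hW0)
    omega
  let act : MulAction G X :=
    { smul := fun g W => ⟨(W : Submodule K V).map (ρ g), hperm g _ W.2⟩
      one_smul := fun W => Subtype.ext (by
        change Submodule.map (ρ 1) _ = _
        rw [map_one]; exact Submodule.map_id _)
      mul_smul := fun g h W => Subtype.ext (by
        change Submodule.map (ρ (g * h)) _ = Submodule.map (ρ g) (Submodule.map (ρ h) _)
        rw [map_mul]; exact Submodule.map_comp _ _ _) }
  let N := (MulAction.toPermHom G X).ker
  have hN : derivedSeries G (r - 1) ≤ N := by
    rw [← Subgroup.map_eq_bot_iff, ← le_bot_iff,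
      ← derivedSeries_perm hr.symm (by omega) (by omega)]
    exact map_derivedSeries_le_derivedSeries _ _
  have hle : r - 1 + f (n - (r - 1)) ≤ f n := by
    have := hf.add_le_nat (r - 1) (n - (r - 1))
    rwa [Nat.add_sub_cancel' (by omega)] at this
  refine (derivedSeries_antitone G hle).trans ((derivedSeries_add_le_map hN _).trans ?_)
  rintro _ ⟨g, hg, rfl⟩
  have hNW : ∀ W ∈ X, ∀ g : N, W ≤ W.comap ((ρ.comp N.subtype) g) := by
    intro W hW g
    have h1 : (MulAction.toPermHom G X) g = 1 := g.2
    have h2 : Submodule.map (ρ g) W = W :=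
      congrArg Subtype.val (congrArg (fun σ : Equiv.Perm X => σ ⟨W, hW⟩) h1)
    rw [← Submodule.map_le_iff_le_comap]
    exact h2.le
  have key : sSup X ≤ LinearMap.eqLocus (ρ g) LinearMap.id := by
    refine sSup_le fun W hW x hx => ?_
    have := IH (n - (r - 1)) (by omega) N N.subtype N.subtype_injective W
      (Representation.subrepresentation (ρ.comp N.subtype) W (hNW W hW))
      (by have := hdim W hW; omega) hg
    exact congrArg Subtype.val (congrArg (fun φ => (φ ⟨x, hx⟩ : W)) this)
  rw [htop] at key
  rw [MonoidHom.mem_ker]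
  ext x
  exact key (Submodule.mem_top (x := x))

theorem derivedSeries_le_ker_of_reducible (ρ : Representation K G V) {f : ℕ → ℕ}
    (hf : StrictMono f) {n : ℕ} (hV : finrank K V = n)
    (IH : SmallBound.{u, v, w} K G f n) (W : Submodule K V) (h0 : W ≠ ⊥) (h1 : W ≠ ⊤)
    (hW : ∀ g, W ≤ W.comap (ρ g)) :
    derivedSeries G (f n) ≤ ρ.ker := by
  have hn : 0 < n := by
    rw [← hV, finrank_pos_iff]
    by_contra h
    rw [not_nontrivial_iff_subsingleton] at h
    exact h0 (Subsingleton.elim _ _)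
  have a1 : finrank K W < finrank K V := Submodule.finrank_lt h1
  have a2 : finrank K (V ⧸ W) + finrank K W = finrank K V := W.finrank_quotient_add_finrank
  have a3 : 0 < finrank K W := by
    rw [finrank_pos_iff, Submodule.nontrivial_iff_ne_bot]; exact h0
  have hle : f (n - 1) + 1 ≤ f n := hf (show n - 1 < n by omega)
  refine (derivedSeries_antitone G hle).trans (derivedSeries_le_ker_of_submodule ρ W hW ?_ ?_)
  · exact IH (n - 1) (by omega) G (MonoidHom.id G) Function.injective_id W _ (by omega)
  · exact IH (n - 1) (by omega) G (MonoidHom.id G) Function.injective_id (V ⧸ W) _ (by omega)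

/-- The subgroup of elements acting as scalars. -/
def scalarSubgroup (ρ : Representation K G V) : Subgroup G where
  carrier := {g | ∃ c : K, ρ g = c • 1}
  one_mem' := ⟨1, by simp⟩
  mul_mem' := by
    rintro g h ⟨c, hc⟩ ⟨d, hd⟩
    exact ⟨c * d, by rw [map_mul, hc, hd, smul_mul_smul_comm, one_mul]⟩
  inv_mem' := by
    rintro g ⟨c, hc⟩
    rcases subsingleton_or_nontrivial V with hV | hV
    · exact ⟨1, Subsingleton.elim _ _⟩
    have hc0 : c ≠ 0 := by
      rintro rfl
      have : ρ g * ρ g⁻¹ = 1 := by rw [← map_mul, mul_inv_cancel, map_one]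
      rw [hc] at this
      simp at this
    refine ⟨c⁻¹, ?_⟩
    have : ρ g * ρ g⁻¹ = 1 := by rw [← map_mul, mul_inv_cancel, map_one]
    rw [hc, smul_one_mul] at this
    rw [← this, smul_smul, inv_mul_cancel₀ hc0, one_smul]

theorem mem_scalarSubgroup {ρ : Representation K G V} {g : G} :
    g ∈ scalarSubgroup ρ ↔ ∃ c : K, ρ g = c • 1 := Iff.rfl

instance scalarSubgroup_normal (ρ : Representation K G V) : (scalarSubgroup ρ).Normal where
  conj_mem := by
    rintro g ⟨c, hc⟩ h
    refine ⟨c, ?_⟩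
    rw [map_mul, map_mul, hc, mul_smul_one, smul_mul_assoc, ← map_mul, mul_inv_cancel, map_one]

/-- A normal subgroup `A` acting by commuting operators, not all of them scalars, makes the
representation reducible or imprimitive: `G` permutes the joint eigenspaces `W χ` of `A`. -/
theorem derivedSeries_le_ker_of_nonscalar [IsAlgClosed K] (ρ : Representation K G V) {f : ℕ → ℕ}
    (hf : StrictMono f) {n : ℕ} (hn : n ≤ 4) (hV : finrank K V = n)
    (IH : SmallBound.{u, v, w} K G f n) (A : Subgroup G) [hA : A.Normal]
    (hcomm : ∀ a ∈ A, ∀ b ∈ A, ρ a * ρ b = ρ b * ρ a) (hns : ¬ A ≤ scalarSubgroup ρ) :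
    derivedSeries G (f n) ≤ ρ.ker := by
  rcases subsingleton_or_nontrivial V with hV' | hV'
  · exact fun g _ => Subsingleton.elim _ _
  let T : A → End K V := fun a => ρ a
  let W : (A → K) → Submodule K V := fun χ => ⨅ a, (T a).eigenspace (χ a)
  have hmem : ∀ χ v, v ∈ W χ ↔ ∀ a : A, ρ a v = χ a • v := by
    intro χ v
    simp only [W, Submodule.mem_iInf, End.mem_eigenspace_iff, T]
  have hconj : ∀ (g : G) (a : A), g⁻¹ * a * g ∈ A := fun g a => by
    simpa using hA.conj_mem a a.2 g⁻¹
  have hmap_le : ∀ g χ, (W χ).map (ρ g) ≤ W fun a => χ ⟨g⁻¹ * a * g, hconj g a⟩ := by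
    rintro g χ _ ⟨v, hv, rfl⟩
    rw [hmem]
    intro a
    have h := (hmem χ v).1 hv ⟨g⁻¹ * a * g, hconj g a⟩
    have h2 : (a : G) * g = g * (g⁻¹ * a * g) := by group
    rw [← Module.End.mul_apply, ← map_mul, h2, map_mul, Module.End.mul_apply, h, map_smul]
  have hmap : ∀ g χ, (W χ).map (ρ g) = W fun a => χ ⟨g⁻¹ * a * g, hconj g a⟩ := by
    intro g χ
    refine le_antisymm (hmap_le g χ) fun v hv => ?_
    have h := hmap_le g⁻¹ _ (Submodule.mem_map_of_mem (f := ρ g⁻¹) hv)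
    refine ⟨ρ g⁻¹ v, ?_, by simp⟩
    refine (congrArg (fun ψ => ρ g⁻¹ v ∈ W ψ) ?_).mp h
    funext a
    exact congrArg χ (Subtype.ext (by simp [mul_assoc]))
  have hindW : iSupIndep W := by
    refine iSupIndep.mono (End.independent_iInf_maxGenEigenspace_of_forall_mapsTo T ?_) ?_
    · intro a b φ
      exact End.mapsTo_maxGenEigenspace_of_comm (hcomm _ b.2 _ a.2) φ
    · intro χ
      refine iInf_mono fun a => ?_
      exact ((T a).genEigenspace (χ a)).monotone le_top
  by_cases htop : iSup W = ⊤
  · refine derivedSeries_le_ker_of_decomposition ρ hf hn hV IH (X := Set.range W \ {⊥})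
      (hindW.sSupIndep_range.mono Set.sdiff_subset) ?_ (by simp) ?_ ?_
    · rw [sSup_sdiff_singleton_bot, sSup_range, htop]
    · by_contra hX
      rw [Set.not_nontrivial_iff] at hX
      apply hns
      have hex : ∃ χ, W χ ≠ ⊥ := by
        by_contra! h
        rw [iSup_eq_bot.2 h] at htop
        exact bot_ne_top htop
      obtain ⟨χ, hχ⟩ := hex
      have hχ' : W χ = ⊤ := by
        rw [← top_le_iff, ← htop]
        refine iSup_le fun ψ => ?_
        by_cases h : W ψ = ⊥
        · rw [h]; exact bot_le
        · exact (hX ⟨⟨ψ, rfl⟩, h⟩ ⟨⟨χ, rfl⟩, hχ⟩).le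
      intro a ha
      refine ⟨χ ⟨a, ha⟩, ?_⟩
      ext v
      exact (hmem χ v).1 (hχ' ▸ Submodule.mem_top) ⟨a, ha⟩
    · rintro g _ ⟨⟨χ, rfl⟩, hχ⟩
      refine ⟨⟨_, (hmap g χ).symm⟩, fun h => hχ ?_⟩
      exact Submodule.map_injective_of_injective (ρ.apply_bijective g).1
        (h.trans (Submodule.map_bot _).symm)
  · refine derivedSeries_le_ker_of_reducible ρ hf hV IH (iSup W) ?_ htop ?_
    · obtain ⟨v, hv0, hv⟩ := exists_joint_eigenvector (V := V) (K := K) (Set.range T) (by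
        rintro _ ⟨a, rfl⟩ _ ⟨b, rfl⟩
        exact hcomm _ a.2 _ b.2)
      choose μ hμ using fun a : A => hv (T a) ⟨a, rfl⟩
      rw [Submodule.ne_bot_iff]
      exact ⟨v, Submodule.mem_iSup_of_mem μ ((hmem μ v).2 hμ), hv0⟩
    · intro g
      rw [← Submodule.map_le_iff_le_comap, Submodule.map_iSup]
      exact iSup_le fun χ => (hmap g χ).le.trans (le_iSup W _)

/-- The induction step, reduced to representations of dimension exactly `n ≥ 2` in which every
normal subgroup acting commutatively acts by scalars, while not all of `G` acts by scalars. -/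
theorem derivedSeries_le_ker_step [IsAlgClosed K] (ρ : Representation K G V) {f : ℕ → ℕ}
    (hf : StrictMono f) {n : ℕ} (hn : n ≤ 4) (hV : finrank K V ≤ n)
    (IH : SmallBound.{u, v, w} K G f n)
    (hprim : finrank K V = n → 2 ≤ n →
      (∀ A : Subgroup G, A.Normal → (∀ a ∈ A, ∀ b ∈ A, ρ a * ρ b = ρ b * ρ a) →
        A ≤ scalarSubgroup ρ) →
      scalarSubgroup ρ ≠ ⊤ → derivedSeries G (f n) ≤ ρ.ker) :
    derivedSeries G (f n) ≤ ρ.ker := by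
  rcases hV.lt_or_eq with hlt | heq
  · exact (derivedSeries_antitone G (hf.monotone hlt.le)).trans
      (IH _ hlt G (MonoidHom.id G) Function.injective_id V ρ le_rfl)
  rcases Nat.eq_zero_or_pos n with rfl | hpos
  · have : Subsingleton V := finrank_zero_iff.1 heq
    exact fun g _ => Subsingleton.elim _ _
  by_cases hA : ∀ A : Subgroup G, A.Normal → (∀ a ∈ A, ∀ b ∈ A, ρ a * ρ b = ρ b * ρ a) →
        A ≤ scalarSubgroup ρ
  · have htriv : scalarSubgroup ρ = ⊤ → derivedSeries G (f n) ≤ ρ.ker := by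
      intro h
      have h1 : 0 + 1 ≤ f n := (Nat.succ_le_of_lt hpos).trans (hf.le_apply)
      refine (derivedSeries_antitone G h1).trans
        (derivedSeries_succ_le_of_comm (d := 0) ρ (N := scalarSubgroup ρ) (by rw [h]; exact le_top)
          ?_)
      rintro g ⟨c, hc⟩ k -
      rw [hc, smul_one_mul, mul_smul_one]
    by_cases hZ : scalarSubgroup ρ = ⊤
    · exact htriv hZ
    refine hprim heq ?_ hA hZ
    by_contra h2
    have hn1 : finrank K V = 1 := by omega
    refine hZ (top_le_iff.1 fun g _ => ?_)
    obtain ⟨v, hv0, hv⟩ := finrank_eq_one_iff'.1 hn1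
    obtain ⟨c, hc⟩ := hv (ρ g v)
    refine ⟨c, ?_⟩
    ext x
    obtain ⟨d, rfl⟩ := hv x
    rw [map_smul, ← hc, smul_comm]; rfl
  · push Not at hA
    obtain ⟨A, hAn, hAc, hAs⟩ := hA
    exact derivedSeries_le_ker_of_nonscalar ρ hf hn heq IH A hAc hAs

end

/-! ### The commutator form in the quasi-primitive case -/

section
variable {K : Type w} [Field K] {G : Type u} [Group G] {V : Type v} [AddCommGroup V] [Module K V]
  [FiniteDimensional K V]

theorem rep_mul_inv (ρ : Representation K G V) (g : G) : ρ g * ρ g⁻¹ = 1 := by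
  rw [← map_mul, mul_inv_cancel, map_one]

theorem rep_inv_mul (ρ : Representation K G V) (g : G) : ρ g⁻¹ * ρ g = 1 := by
  rw [← map_mul, inv_mul_cancel, map_one]

theorem rep_ne_zero [Nontrivial V] (ρ : Representation K G V) (g : G) : ρ g ≠ 0 := by
  intro h
  have := rep_mul_inv ρ g
  rw [h, zero_mul] at this
  exact zero_ne_one this

theorem smul_rep_injective [Nontrivial V] (ρ : Representation K G V) {g : G} {c d : K}
    (h : c • ρ g = d • ρ g) : c = d := by
  rw [← sub_eq_zero, ← sub_smul] at h
  exact sub_eq_zero.1 ((smul_eq_zero.1 h).resolve_right (rep_ne_zero ρ g))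

theorem exists_commutator_scalar [Nontrivial V] (ρ : Representation K G V) {g h : G}
    (hgh : ⁅g, h⁆ ∈ scalarSubgroup ρ) : ∃ c : Kˣ, ρ g * ρ h = (c : K) • (ρ h * ρ g) := by
  obtain ⟨c, hc⟩ := hgh
  have hc0 : c ≠ 0 := by
    rintro rfl
    rw [zero_smul] at hc
    exact rep_ne_zero ρ _ hc
  refine ⟨Units.mk0 c hc0, ?_⟩
  have : g * h = ⁅g, h⁆ * (h * g) := by rw [commutatorElement_def]; group
  rw [← map_mul, this, map_mul, hc, smul_one_mul, map_mul]; rfl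

theorem commutator_mem_scalarSubgroup (ρ : Representation K G V) {g h : G} {c : K}
    (hc : ρ g * ρ h = c • (ρ h * ρ g)) : ⁅g, h⁆ ∈ scalarSubgroup ρ := by
  refine ⟨c, ?_⟩
  rw [commutatorElement_def, map_mul, map_mul, map_mul, hc, smul_mul_assoc, smul_mul_assoc,
    mul_assoc (ρ h), rep_mul_inv, mul_one, rep_mul_inv]

/-- On a subgroup that is abelian modulo scalars, `ρ g * ρ h` is a scalar multiple of `ρ h * ρ g`,
and this scalar is multiplicative in both arguments. -/
theorem exists_commutator_form [Nontrivial V] (ρ : Representation K G V) (E : Subgroup G)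
    (hE : ∀ g ∈ E, ∀ h ∈ E, ⁅g, h⁆ ∈ scalarSubgroup ρ) :
    ∃ B : E →* E →* Kˣ, ∀ g h : E, ρ g * ρ h = (B g h : K) • (ρ h * ρ g) := by
  choose b hb using fun g h : E => exists_commutator_scalar ρ (hE g g.2 h h.2)
  have huniq : ∀ (g h : E) (c : Kˣ), ρ g * ρ h = (c : K) • (ρ h * ρ g) → b g h = c := by
    intro g h c hc
    rw [hb g h, ← map_mul] at hc
    exact Units.ext (smul_rep_injective ρ hc)
  refine ⟨MonoidHom.mk' (fun g => MonoidHom.mk' (b g) ?_) ?_, fun g h => hb g h⟩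
  · intro h k
    apply huniq
    rw [Subgroup.coe_mul, map_mul, ← mul_assoc, hb g h, smul_mul_assoc, mul_assoc, hb g k,
      mul_smul_comm, smul_smul, ← mul_assoc, Units.val_mul]
  · intro g k
    ext1 h
    apply huniq
    change ρ ((g * k : E) : G) * ρ h = ((b g h * b k h : Kˣ) : K) • _
    rw [Subgroup.coe_mul, map_mul, mul_assoc, hb k h, mul_smul_comm, ← mul_assoc, hb g h,
      smul_mul_assoc, smul_smul, mul_assoc, mul_comm, Units.val_mul]

/-- Taking determinants, the commutator scalars are roots of unity of order dividing the dimension.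
-/
theorem commutator_scalar_pow_finrank [Nontrivial V] (ρ : Representation K G V) {g h : G} {c : K}
    (hc : ρ g * ρ h = c • (ρ h * ρ g)) : c ^ finrank K V = 1 := by
  have h1 := congrArg LinearMap.det hc
  rw [LinearMap.det_smul, map_mul, map_mul, mul_comm (LinearMap.det (ρ h)), ← map_mul, ← map_mul]
    at h1
  have h2 : LinearMap.det (ρ (g * h)) ≠ 0 := by
    intro h0
    have := congrArg LinearMap.det (rep_mul_inv ρ (g * h))
    rw [map_mul, h0, zero_mul, map_one] at this
    exact zero_ne_one this
  exact (mul_right_cancel₀ h2 ((one_mul _).trans h1)).symm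

/-- Every normal subgroup on which the representation is commutative acts by scalars. For
irreducible representations over an algebraically closed field this holds for all quasi-primitive
ones, by Clifford theory; it is the only consequence of quasi-primitivity needed here. -/
def IsQuasiprimitiveLike (ρ : Representation K G V) : Prop :=
  ∀ A : Subgroup G, A.Normal → (∀ a ∈ A, ∀ b ∈ A, ρ a * ρ b = ρ b * ρ a) → A ≤ scalarSubgroup ρ

theorem mem_scalarSubgroup_of_forall_comm {ρ : Representation K G V} (hρ : IsQuasiprimitiveLike ρ)
    {E : Subgroup G} (hE : E.Normal) {g : G} (hg : g ∈ E)
    (h : ∀ k ∈ E, ρ g * ρ k = ρ k * ρ g) : g ∈ scalarSubgroup ρ := by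
  let A : Subgroup G :=
    { carrier := {g | g ∈ E ∧ ∀ k ∈ E, Commute (ρ g) (ρ k)}
      one_mem' := ⟨one_mem _, fun k _ => by rw [map_one]; exact Commute.one_left _⟩
      mul_mem' := fun {a b} ha hb => ⟨mul_mem ha.1 hb.1, fun k hk => by
        rw [map_mul]; exact (ha.2 k hk).mul_left (hb.2 k hk)⟩
      inv_mem' := fun {a} ha => ⟨inv_mem ha.1, fun k hk => by
        have := (ha.2 k hk).eq
        calc ρ a⁻¹ * ρ k = ρ a⁻¹ * (ρ k * ρ a) * ρ a⁻¹ := by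
              rw [mul_assoc, mul_assoc, rep_mul_inv, mul_one]
          _ = ρ k * ρ a⁻¹ := by
              rw [← this, ← mul_assoc, rep_inv_mul, one_mul]⟩ }
  refine hρ A ⟨fun a ha x => ⟨hE.conj_mem a ha.1 x, fun k hk => ?_⟩⟩
    (fun a ha b hb => ha.2 b hb.1) ⟨hg, h⟩
  have h1 := (ha.2 _ (hE.conj_mem k hk x⁻¹)).eq
  have h2 := congrArg (fun T => ρ x * T * ρ x⁻¹) h1
  simp only [← map_mul] at h2
  change ρ _ * ρ _ = ρ _ * ρ _
  rw [← map_mul, ← map_mul]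
  convert h2 using 2 <;> group

/-- The last term of the derived series not contained in the scalars is abelian modulo scalars. -/
theorem exists_abelian_mod_scalar [Group.IsSolvable G] {ρ : Representation K G V}
    (hZ : scalarSubgroup ρ ≠ ⊤) :
    ∃ E : Subgroup G, E.Normal ∧ ¬ E ≤ scalarSubgroup ρ ∧
      ∀ g ∈ E, ∀ h ∈ E, ⁅g, h⁆ ∈ scalarSubgroup ρ := by
  classical
  have hex : ∃ k, derivedSeries G k ≤ scalarSubgroup ρ := by
    obtain ⟨k, hk⟩ := (Group.isSolvable_def G).1 ‹_›
    exact ⟨k, by rw [hk]; exact bot_le⟩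
  obtain ⟨k, hk⟩ : ∃ k, Nat.find hex = k + 1 := by
    refine Nat.exists_eq_succ_of_ne_zero fun h0 => hZ ?_
    have := Nat.find_spec hex
    rwa [h0, derivedSeries_zero, top_le_iff] at this
  refine ⟨derivedSeries G k, derivedSeries_normal G k, Nat.find_min hex (by omega), ?_⟩
  intro g hg h hh
  have := Nat.find_spec hex
  rw [hk, derivedSeries_succ] at this
  exact this (Subgroup.commutator_mem_commutator hg hh)

/-- In dimension `l ^ k`, there is a normal subgroup `E` that modulo scalars is abelian of exponent
`l`, with a nontrivial commutator form `B` whose radical acts by scalars. It consists of the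
elements of order dividing `l` modulo scalars, in a normal subgroup that is abelian modulo scalars.
-/
theorem exists_symplectic [Group.IsSolvable G] [Nontrivial V] {ρ : Representation K G V}
    (hρ : IsQuasiprimitiveLike ρ) (hZ : scalarSubgroup ρ ≠ ⊤) {l k : ℕ}
    (hV : finrank K V = l ^ k) :
    ∃ (E : Subgroup G) (B : E →* E →* Kˣ), E.Normal ∧
      (∀ g h : E, ρ g * ρ h = (B g h : K) • (ρ h * ρ g)) ∧
      (∀ g : E, (g : G) ^ l ∈ scalarSubgroup ρ) ∧ (∀ g h, B g h ^ l = 1) ∧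
      (∀ g : E, B g = 1 → (g : G) ∈ scalarSubgroup ρ) ∧ ∃ e f, B e f ≠ 1 := by
  classical
  obtain ⟨E₀, hE₀, hE₀Z, hE₀c⟩ := exists_abelian_mod_scalar hZ
  obtain ⟨B₀, hB₀⟩ := exists_commutator_form ρ E₀ hE₀c
  set Z := scalarSubgroup ρ with hZdef
  have hpow : ∀ g ∈ E₀, g ^ l ^ k ∈ Z := by
    intro g hg
    refine mem_scalarSubgroup_of_forall_comm hρ hE₀ (pow_mem hg _) fun h hh => ?_
    have h1 := hB₀ (⟨g, hg⟩ ^ l ^ k) ⟨h, hh⟩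
    have h2 := commutator_scalar_pow_finrank ρ (hB₀ ⟨g, hg⟩ ⟨h, hh⟩)
    rw [hV] at h2
    rw [map_pow, MonoidHom.pow_apply, Units.val_pow_eq_pow_val, h2, one_smul] at h1
    exact h1
  let E : Subgroup G :=
    { carrier := {g | g ∈ E₀ ∧ g ^ l ∈ Z}
      one_mem' := ⟨one_mem _, by rw [one_pow]; exact one_mem _⟩
      mul_mem' := fun {a b} ha hb => ⟨mul_mem ha.1 hb.1, by
        have hc : Commute (QuotientGroup.mk a : G ⧸ Z) (QuotientGroup.mk b) := by
          rw [← commutatorElement_eq_one_iff_commute]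
          exact (QuotientGroup.eq_one_iff _).2 (hE₀c a ha.1 b hb.1)
        have h1 := (QuotientGroup.eq_one_iff _).2 ha.2
        have h2 := (QuotientGroup.eq_one_iff _).2 hb.2
        rw [QuotientGroup.mk_pow] at h1 h2
        rw [← QuotientGroup.eq_one_iff, QuotientGroup.mk_pow, QuotientGroup.mk_mul, hc.mul_pow,
          h1, h2, one_mul]⟩
      inv_mem' := fun {a} ha => ⟨inv_mem ha.1, by rw [inv_pow]; exact inv_mem ha.2⟩ }
  have hEn : E.Normal := ⟨fun a ha x => ⟨hE₀.conj_mem a ha.1 x, by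
    rw [conj_pow]; exact (scalarSubgroup_normal ρ).conj_mem _ ha.2 x⟩⟩
  have hEZ : ¬ E ≤ Z := by
    obtain ⟨g, hg, hgZ⟩ := Set.not_subset.1 hE₀Z
    have hex : ∃ j, g ^ l ^ j ∈ Z := ⟨k, hpow g hg⟩
    obtain ⟨j, hj⟩ : ∃ j, Nat.find hex = j + 1 := by
      refine Nat.exists_eq_succ_of_ne_zero fun h0 => hgZ ?_
      have := Nat.find_spec hex
      rwa [h0, pow_zero, pow_one] at this
    intro hle
    refine Nat.find_min hex (m := j) (by omega) (hle ⟨pow_mem hg _, ?_⟩)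
    have := Nat.find_spec hex
    rwa [hj, pow_succ, pow_mul] at this
  obtain ⟨B, hB⟩ := exists_commutator_form ρ E fun g hg h hh => hE₀c g hg.1 h hh.1
  have hrad : ∀ g : E, B g = 1 → (g : G) ∈ Z := by
    intro g hg
    refine mem_scalarSubgroup_of_forall_comm hρ hEn g.2 fun h hh => ?_
    have := hB g ⟨h, hh⟩
    rwa [hg, MonoidHom.one_apply, Units.val_one, one_smul] at this
  refine ⟨E, B, hEn, hB, fun g => g.2.2, ?_, hrad, ?_⟩
  · intro g h
    obtain ⟨c, hc⟩ := g.2.2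
    have h1 := hB (g ^ l) h
    have h2 : ρ ((g ^ l : E) : G) * ρ h = ρ h * ρ ((g ^ l : E) : G) := by
      rw [Subgroup.coe_pow, hc, smul_one_mul, mul_smul_one]
    rw [h2, ← map_mul, map_pow, MonoidHom.pow_apply] at h1
    exact Units.ext (smul_rep_injective ρ ((one_smul K _).trans h1)).symm
  · by_contra! hall
    exact hEZ fun g hg => hrad ⟨g, hg⟩ (by ext h; simp [hall])
end

/-! ### Representations in characteristic two of groups of order not divisible by 27 -/

theorem three_mul_card_ker_dvd {A M : Type*} [Group A] [Finite A] [Group M] (φ : A →* M) (x : A)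
    (h3 : φ x ^ 3 = 1) (h1 : φ x ≠ 1) : 3 * Nat.card φ.ker ∣ Nat.card A := by
  rw [← φ.ker.card_mul_index, mul_comm, Subgroup.index_ker]
  refine Nat.mul_dvd_mul_left _ ?_
  have : Fact (Nat.Prime 3) := ⟨Nat.prime_three⟩
  have ho : orderOf (⟨φ x, x, rfl⟩ : φ.range) = 3 := by
    rw [← Subgroup.orderOf_coe]
    exact orderOf_eq_prime h3 h1
  rw [← ho]
  exact orderOf_dvd_natCard _

section
variable {K : Type w} [Field K] {G : Type u} [Group G] {V : Type v} [AddCommGroup V] [Module K V]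
  [FiniteDimensional K V]

theorem form_self [Nontrivial V] {ρ : Representation K G V} {E : Subgroup G} {B : E →* E →* Kˣ}
    (hB : ∀ g h : E, ρ g * ρ h = (B g h : K) • (ρ h * ρ g)) (g : E) : B g g = 1 := by
  have := hB g g
  rw [← map_mul] at this
  exact Units.ext (smul_rep_injective ρ ((one_smul K _).trans this)).symm

theorem form_swap [Nontrivial V] {ρ : Representation K G V} {E : Subgroup G} {B : E →* E →* Kˣ}
    (hB : ∀ g h : E, ρ g * ρ h = (B g h : K) • (ρ h * ρ g)) (g h : E) : B h g = (B g h)⁻¹ := by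
  have := form_self hB (g * h)
  simp only [map_mul, MonoidHom.mul_apply, form_self hB, one_mul, mul_one] at this
  rw [eq_inv_iff_mul_eq_one, ← this, mul_comm]

/-- A nontrivial commutator form with values of order `3` forces an extraspecial section: passing to
the elements orthogonal to `e`, and then to those that are also orthogonal to `f`, loses a factor
`3` each time, and the subgroup left contains `⁅e, f⁆`, which acts as a scalar of order `3`. -/
theorem twentyseven_dvd_card [Finite G] [Nontrivial V] {ρ : Representation K G V}
    {E : Subgroup G} {B : E →* E →* Kˣ}
    (hB : ∀ g h : E, ρ g * ρ h = (B g h : K) • (ρ h * ρ g)) (h3 : ∀ g h, B g h ^ 3 = 1)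
    {e f : E} (hef : B e f ≠ 1) : 27 ∣ Nat.card G := by
  have hfe : B f e ≠ 1 := by rw [form_swap hB, Ne, inv_eq_one]; exact hef
  have d1 := three_mul_card_ker_dvd (B.flip e) f (h3 f e) hfe
  set D₁ := (B.flip e).ker
  have d2 := three_mul_card_ker_dvd ((B.flip f).comp D₁.subtype) ⟨e, form_self hB e⟩ (h3 e f) hef
  set D₂ := ((B.flip f).comp D₁.subtype).ker
  have hB1 : B ⁅e, f⁆ = 1 := by
    rw [map_commutatorElement, commutatorElement_eq_one_iff_commute]; exact Commute.all (B e) (B f)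
  have hm1 : ⁅e, f⁆ ∈ D₁ := by
    change B ⁅e, f⁆ e = 1
    rw [hB1]; rfl
  have hm2 : (⟨⁅e, f⁆, hm1⟩ : D₁) ∈ D₂ := by
    change B ⁅e, f⁆ f = 1
    rw [hB1]; rfl
  have hval : ρ ((⁅e, f⁆ : E) : G) = (B e f : K) • 1 := by
    have : (⁅e, f⁆ : E) * (f * e) = e * f := by rw [commutatorElement_def]; group
    have h2 : ρ ((⁅e, f⁆ : E) : G) * ρ ((f * e : E) : G) = (B e f : K) • ρ ((f * e : E) : G) := by
      rw [← map_mul, ← Subgroup.coe_mul, this, Subgroup.coe_mul, map_mul, hB, Subgroup.coe_mul,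
        map_mul]
    have h3 := congrArg (fun T => T * ρ ((f * e : E) : G)⁻¹) h2
    simpa only [mul_assoc, smul_mul_assoc, rep_mul_inv, mul_one] using h3
  have d3 := three_mul_card_ker_dvd
    (ρ.asGroupHom.comp ((E.subtype.comp D₁.subtype).comp D₂.subtype)) ⟨⟨⁅e, f⁆, hm1⟩, hm2⟩
    (by
      apply Units.ext
      rw [Units.val_pow_eq_pow_val]
      change ρ ((⁅e, f⁆ : E) : G) ^ 3 = 1
      rw [hval, smul_pow, one_pow, ← Units.val_pow_eq_pow_val, h3]
      simp)
    (by
      intro h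
      have h' : ρ ((⁅e, f⁆ : E) : G) = 1 := congrArg Units.val h
      rw [hval, ← map_one ρ] at h'
      exact hef (Units.ext (smul_rep_injective ρ (h'.trans (one_smul K _).symm))))
  have := E.card_subgroup_dvd_card
  calc 27 = 3 * (3 * (3 * 1)) := by norm_num
    _ ∣ 3 * (3 * Nat.card D₂) := mul_dvd_mul_left _ (mul_dvd_mul_left _
        ((mul_dvd_mul_left _ (one_dvd _)).trans d3))
    _ ∣ 3 * Nat.card D₁ := mul_dvd_mul_left _ d2
    _ ∣ Nat.card E := d1
    _ ∣ Nat.card G := this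

end

/-- In characteristic two, a finite solvable group whose order is not divisible by `27` acts on a
space of dimension `n ≤ 4` with derived length at most `n`. The quasi-primitive case does not
occur. -/
theorem derivedSeries_le_ker_char_two (K : Type w) [Field K] [IsAlgClosed K] [CharP K 2] (n : ℕ)
    (hn : n ≤ 4) (G : Type u) [Group G] [Finite G] [Group.IsSolvable G] (hG : ¬ 27 ∣ Nat.card G)
    (V : Type v) [AddCommGroup V] [Module K V] [FiniteDimensional K V] (ρ : Representation K G V)
    (hV : finrank K V ≤ n) : derivedSeries G n ≤ ρ.ker := by
  induction n using Nat.strong_induction_on generalizing G V with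
  | _ n IH =>
  refine derivedSeries_le_ker_step ρ (f := id) strictMono_id hn hV ?_ ?_
  · intro m hm N _ i hi W _ _ _ σ hW
    have : Finite N := Finite.of_injective i hi
    have : Group.IsSolvable N := Group.isSolvable_of_isSolvable_injective hi
    exact IH m hm (by omega) N (fun h => hG (h.trans (Subgroup.card_dvd_of_injective i hi))) W σ hW
  · intro hVn hn2 hρ hZ
    exfalso
    have : Nontrivial V := by
      rw [← finrank_pos_iff (R := K)]; omega
    have two : ∀ k, finrank K V = 2 ^ k → False := by
      intro k hk
      obtain ⟨E, B, -, -, -, h2, -, e, f, hef⟩ := exists_symplectic hρ hZ hk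
      apply hef
      have := congrArg Units.val (h2 e f)
      rw [Units.val_pow_eq_pow_val, Units.val_one, sq_eq_one_iff, CharTwo.neg_eq, or_self] at this
      exact Units.ext this
    interval_cases n
    · exact two 1 hVn
    · obtain ⟨E, B, -, hB, -, h3, -, e, f, hef⟩ := exists_symplectic (l := 3) (k := 1) hρ hZ hVn
      exact hG (twentyseven_dvd_card hB h3 hef)
    · exact two 2 hVn

/-! ### Spanning by the operators of the normal subgroup, and the action on it modulo scalars -/

section
variable {K : Type w} [Field K] {G : Type u} [Group G] {V : Type v} [AddCommGroup V] [Module K V]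
  [FiniteDimensional K V]

/-- Operators of `E` with distinct characters `B (u i)` are linearly independent: conjugation by `E`
acts on them through distinct characters. -/
theorem linearIndependent_of_form [Nontrivial V] {ρ : Representation K G V} {E : Subgroup G}
    {B : E →* E →* Kˣ} (hB : ∀ g h : E, ρ g * ρ h = (B g h : K) • (ρ h * ρ g)) {ι : Type*}
    [Fintype ι] {u : ι → E} (hu : Function.Injective fun i => B (u i)) :
    LinearIndependent K fun i => ρ (u i) := by
  rw [Fintype.linearIndependent_iff]
  intro c hc i
  have hconj : ∀ h : E, ∑ i, (c i * B (u i) h) • ρ (u i) = 0 := by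
    intro h
    have h1 := congrArg (fun T => ρ ((h : G)⁻¹) * T * ρ h) hc
    simp only [Finset.mul_sum, Finset.sum_mul, mul_zero, zero_mul] at h1
    rw [← h1]
    refine Finset.sum_congr rfl fun i _ => ?_
    rw [mul_smul_comm, smul_mul_assoc, mul_assoc, hB, mul_smul_comm, ← mul_assoc, rep_inv_mul,
      one_mul, smul_smul]
  have hind := (linearIndependent_monoidHom E K).comp
    (fun i => (Units.coeHom K).comp (B (u i))) (by
      intro i j hij
      apply hu
      ext h
      exact DFunLike.congr_fun hij h)
  rw [Fintype.linearIndependent_iff] at hind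
  have hφ : ∀ φ : Module.Dual K (End K V), φ (c i • ρ (u i)) = 0 := by
    intro φ
    rw [map_smul, smul_eq_mul]
    refine hind (fun i => c i * φ (ρ (u i))) ?_ i
    ext h
    have := congrArg φ (hconj h)
    rw [map_sum, map_zero] at this
    rw [Pi.zero_apply, ← this, Finset.sum_apply]
    refine Finset.sum_congr rfl fun i _ => ?_
    rw [map_smul, smul_eq_mul, Pi.smul_apply, smul_eq_mul]
    change c i * φ (ρ (u i)) * (B (u i) h : K) = _
    ring
  have := (Module.forall_dual_apply_eq_zero_iff K _).1 hφ
  exact (smul_eq_zero.1 this).resolve_right (rep_ne_zero ρ _)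

/-- If `(dim V) ^ 2` elements of `E` have distinct characters, their operators span `End K V`, so
whatever commutes with them is a scalar. -/
theorem mem_scalarSubgroup_of_comm_family [Nontrivial V] {ρ : Representation K G V}
    {E : Subgroup G} {B : E →* E →* Kˣ}
    (hB : ∀ g h : E, ρ g * ρ h = (B g h : K) • (ρ h * ρ g)) {ι : Type*}
    [Fintype ι] {u : ι → E} (hu : Function.Injective fun i => B (u i))
    (hcard : Fintype.card ι = finrank K V ^ 2) {g : G}
    (hg : ∀ i, Commute (ρ g) (ρ (u i))) : g ∈ scalarSubgroup ρ := by
  have hspan : Submodule.span K (Set.range fun i => ρ (u i)) = ⊤ := by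
    apply (linearIndependent_of_form hB hu).span_eq_top_of_card_eq_finrank'
    rw [hcard, Module.finrank_linearMap, sq]
  have hcen : ρ g ∈ Subalgebra.center K (End K V) := by
    rw [Subalgebra.mem_center_iff]
    intro T
    have hT : T ∈ Submodule.span K (Set.range fun i => ρ (u i)) := hspan ▸ Submodule.mem_top
    induction hT using Submodule.span_induction with
    | mem x hx => obtain ⟨i, rfl⟩ := hx; exact (hg i).eq.symm
    | zero => rw [zero_mul, mul_zero]
    | add x y _ _ hx hy => rw [add_mul, mul_add, hx, hy]
    | smul a x _ hx => rw [smul_mul_assoc, mul_smul_comm, hx]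
  rw [Algebra.IsCentral.center_eq_bot, Algebra.mem_bot] at hcen
  obtain ⟨c, hc⟩ := hcen
  exact ⟨c, by rw [← hc, Algebra.algebraMap_eq_smul_one]⟩

/-- If `g` and `h` commute with `u` up to scalars, then the commutator of `g` and `h` commutes with
`u` exactly. -/
theorem commute_commutator [Nontrivial V] (ρ : Representation K G V) {g h u : G}
    (hg : ⁅g, u⁆ ∈ scalarSubgroup ρ) (hh : ⁅h, u⁆ ∈ scalarSubgroup ρ) :
    Commute (ρ ⁅g, h⁆) (ρ u) := by
  obtain ⟨c, hc⟩ := exists_commutator_scalar ρ hg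
  obtain ⟨d, hd⟩ := exists_commutator_scalar ρ hh
  have h1 : ρ (g * h) * ρ u = ((c * d : Kˣ) : K) • (ρ u * ρ (g * h)) := by
    rw [map_mul, mul_assoc, hd, mul_smul_comm, ← mul_assoc, hc, smul_mul_assoc, smul_smul,
      mul_assoc, Units.val_mul, mul_comm (d : K)]
  have h2 : ρ (h * g) * ρ u = ((c * d : Kˣ) : K) • (ρ u * ρ (h * g)) := by
    rw [map_mul, mul_assoc, hc, mul_smul_comm, ← mul_assoc, hd, smul_mul_assoc, smul_smul,
      mul_assoc, Units.val_mul]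
  have h3 : ⁅g, h⁆ * (h * g) = g * h := by rw [commutatorElement_def]; group
  have h4 : ((c * d : Kˣ) : K) • (ρ ⁅g, h⁆ * ρ u * ρ (h * g)) =
      ((c * d : Kˣ) : K) • (ρ u * ρ ⁅g, h⁆ * ρ (h * g)) := by
    rw [mul_assoc, ← mul_smul_comm, ← h2, ← mul_assoc, ← map_mul, h3, h1, mul_assoc,
      ← map_mul ρ ⁅g, h⁆, h3]
  have h5 := smul_right_injective _ (c * d).ne_zero h4
  have h6 := congrArg (fun T => T * ρ (h * g)⁻¹) h5
  simp only [mul_assoc, rep_mul_inv, mul_one] at h6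
  exact h6

theorem commute_rep_commutator_mem (ρ : Representation K G V) (S : Set G) (D : Subgroup G)
    (h : ∀ g ∈ D, ∀ k ∈ D, ∀ u ∈ S, Commute (ρ ⁅g, k⁆) (ρ u)) {x : G} (hx : x ∈ ⁅D, D⁆) :
    ∀ u ∈ S, Commute (ρ x) (ρ u) := by
  have hle : ⁅D, D⁆ ≤ (Subgroup.centralizer (ρ.asGroupHom '' S)).comap ρ.asGroupHom := by
    rw [Subgroup.commutator_le]
    intro g hg k hk
    rw [Subgroup.mem_comap, Subgroup.mem_centralizer_iff]
    rintro _ ⟨u, hu, rfl⟩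
    exact Units.ext (h g hg k hk u hu).eq.symm
  intro u hu
  have := Subgroup.mem_centralizer_iff.1 (hle hx) _ ⟨u, hu, rfl⟩
  exact (congrArg Units.val this).symm

/-- Suppose that only scalars commute with `E`, and that a term of the derived series acts
trivially on `E` modulo scalars. The next term then commutes with `E`, hence acts by scalars, and
the one after it acts trivially. -/
theorem derivedSeries_le_ker_of_centralizer [Nontrivial V] (ρ : Representation K G V)
    (E : Subgroup G) (hcent : ∀ g, (∀ u ∈ E, Commute (ρ g) (ρ u)) → g ∈ scalarSubgroup ρ) {k : ℕ}
    (hk : ∀ g ∈ derivedSeries G k, ∀ u ∈ E, ⁅g, u⁆ ∈ scalarSubgroup ρ) :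
    derivedSeries G (k + 2) ≤ ρ.ker := by
  refine derivedSeries_succ_le_of_comm ρ (N := scalarSubgroup ρ) (d := k + 1) ?_ ?_
  · intro x hx
    exact hcent x (commute_rep_commutator_mem ρ E _
      (fun g hg h hh u hu => commute_commutator ρ (hk g hg u hu) (hk h hh u hu)) hx)
  · rintro g ⟨c, hc⟩ h ⟨d, hd⟩
    rw [hc, hd, smul_one_mul, mul_smul_one]
end

theorem not_twentyseven_dvd_card_units (V : Type*) [AddCommGroup V] [Module (ZMod 2) V] [Finite V]
    (hV : finrank (ZMod 2) V ≤ 4) : ¬ 27 ∣ Nat.card (End (ZMod 2) V)ˣ := by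
  have : Fact (Nat.Prime 2) := ⟨Nat.prime_two⟩
  have b := Module.finBasis (ZMod 2) V
  have e := Units.mapEquiv (algEquivMatrix b).toRingEquiv.toMulEquiv
  rw [Nat.card_congr e.toEquiv]
  have h := Matrix.card_GL_field (𝔽 := ZMod 2) (finrank (ZMod 2) V)
  have hc : Nat.card (Matrix (Fin (finrank (ZMod 2) V)) (Fin (finrank (ZMod 2) V)) (ZMod 2))ˣ =
    _ := h
  rw [hc, ZMod.card]
  generalize finrank (ZMod 2) V = n at hV
  interval_cases n <;> decide

/-- Extension of scalars does not change the kernel of a representation. -/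
theorem derivedSeries_le_ker_of_baseChange {k : Type*} [Field k] (K : Type*) [Field K]
    [Algebra k K] {G : Type*} [Group G] {V : Type*} [AddCommGroup V] [Module k V]
    (ρ : Representation k G V) {d : ℕ}
    (h : ∀ σ : Representation K G (TensorProduct k K V), derivedSeries G d ≤ σ.ker) :
    derivedSeries G d ≤ ρ.ker := by
  let σ : Representation K G (TensorProduct k K V) :=
    ((End.baseChangeHom k K V : End k V →ₐ[k] _) : End k V →* _).comp ρ
  intro g hg
  have h1 : End.baseChangeHom k K V (ρ g) = 1 := h σ hg
  have hinj : Function.Injective (End.baseChangeHom k K V) :=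
    LinearMap.baseChangeHom_injective k V K
  exact hinj (h1.trans (map_one _).symm)

/-- A solvable group acting on `𝔽₂ ^ m`, for `m ≤ 4`, does so with derived length at most `m`. -/
theorem derivedSeries_le_ker_mod_two {G : Type u} [Group G] [Group.IsSolvable G] {V : Type v}
    [AddCommGroup V] [Module (ZMod 2) V] [Finite V] (ρ : Representation (ZMod 2) G V) {m : ℕ}
    (hm : m ≤ 4) (hV : finrank (ZMod 2) V ≤ m) : derivedSeries G m ≤ ρ.ker := by
  have : Fact (Nat.Prime 2) := ⟨Nat.prime_two⟩
  have : Finite (End (ZMod 2) V) := Finite.of_injective (fun f x => f x) DFunLike.coe_injective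
  set H := ρ.asGroupHom.range with hH
  have : Group.IsSolvable H :=
    Group.isSolvable_of_surjective ρ.asGroupHom.rangeRestrict_surjective
  let τ : Representation (ZMod 2) H V := (Units.coeHom _).comp H.subtype
  have hτ : derivedSeries H m ≤ τ.ker := by
    refine derivedSeries_le_ker_of_baseChange (AlgebraicClosure (ZMod 2)) τ fun σ => ?_
    refine derivedSeries_le_ker_char_two (AlgebraicClosure (ZMod 2)) m hm H ?_ _ σ ?_
    · exact fun h => not_twentyseven_dvd_card_units V (hV.trans hm)
        (h.trans H.card_subgroup_dvd_card)
    · rwa [Module.finrank_baseChange]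
  intro g hg
  exact hτ (map_derivedSeries_le_derivedSeries ρ.asGroupHom.rangeRestrict m ⟨g, hg, rfl⟩)

/-- If `E` is elementary abelian of exponent `2` modulo `Z`, with at most `2 ^ m` cosets as
witnessed by a map `F` separating them, then the term `m` of the derived series of `G` acts
trivially by conjugation on `E` modulo `Z`. -/
theorem commutator_mem_of_card_le {G : Type u} [Group G] [Group.IsSolvable G] {E Z : Subgroup G}
    [hE : E.Normal] [Z.Normal] (hab : ∀ g ∈ E, ∀ h ∈ E, ⁅g, h⁆ ∈ Z) (hsq : ∀ g ∈ E, g ^ 2 ∈ Z)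
    {X : Type*} [Finite X] (F : E → X) (hF : ∀ u v : E, F u = F v → (u : G)⁻¹ * v ∈ Z) {m : ℕ}
    (hm : m ≤ 4) (hX : Nat.card X ≤ 2 ^ m) : ∀ g ∈ derivedSeries G m, ∀ u ∈ E, ⁅g, u⁆ ∈ Z := by
  have : Fact (Nat.Prime 2) := ⟨Nat.prime_two⟩
  let Ē := E.map (QuotientGroup.mk' Z)
  have hEn : Ē.Normal := hE.map _ (QuotientGroup.mk'_surjective Z)
  let : CommGroup Ē :=
    { (inferInstance : Group Ē) with
      mul_comm := by
        rintro ⟨_, a, ha, rfl⟩ ⟨_, b, hb, rfl⟩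
        apply Subtype.ext
        change Commute (QuotientGroup.mk' Z a) (QuotientGroup.mk' Z b)
        rw [← commutatorElement_eq_one_iff_commute, ← map_commutatorElement]
        exact (QuotientGroup.eq_one_iff _).2 (hab a ha b hb) }
  have hpow : ∀ a : Additive Ē, 2 • a = 0 := by
    rintro ⟨_, a, ha, rfl⟩
    apply Subtype.ext
    exact (QuotientGroup.eq_one_iff _).2 (hsq a ha)
  let : Module (ZMod 2) (Additive Ē) := AddCommGroup.zmodModule hpow
  have hinj : ∃ J : Additive Ē → X, Function.Injective J := by
    choose r hr using fun a : Ē => a.2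
    refine ⟨fun a => F ⟨r a.toMul, (hr _).1⟩, fun a b hab => ?_⟩
    have := hF _ _ hab
    apply Additive.toMul.injective
    apply Subtype.ext
    rw [← (hr a.toMul).2, ← (hr b.toMul).2]
    exact QuotientGroup.eq.2 this
  obtain ⟨J, hJ⟩ := hinj
  have : Finite (Additive Ē) := Finite.of_injective J hJ
  have hdim : finrank (ZMod 2) (Additive Ē) ≤ m := by
    have h1 := Nat.card_le_card_of_injective J hJ
    rw [Module.natCard_eq_pow_finrank (K := ZMod 2), Nat.card_zmod] at h1
    exact (Nat.pow_le_pow_iff_right (by norm_num)).1 (h1.trans hX)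
  let σ : Representation (ZMod 2) G (Additive Ē) :=
    { toFun := fun g => AddMonoidHom.toZModLinearMap 2
        (MonoidHom.toAdditive (MulAut.conjNormal (QuotientGroup.mk' Z g) : Ē ≃* Ē).toMonoidHom)
      map_one' := by ext x; simp
      map_mul' := fun g h => by ext x; simp }
  intro g hg u hu
  have h1 : σ g = 1 := derivedSeries_le_ker_mod_two σ hm hdim hg
  have h2 := DFunLike.congr_fun h1 (Additive.ofMul ⟨QuotientGroup.mk' Z u, u, hu, rfl⟩)
  have h3 : QuotientGroup.mk' Z g * QuotientGroup.mk' Z u * (QuotientGroup.mk' Z g)⁻¹ =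
    QuotientGroup.mk' Z u := congrArg (fun a : Additive Ē => (a.toMul : G ⧸ Z)) h2
  rw [← QuotientGroup.eq_one_iff]
  change QuotientGroup.mk' Z ⁅g, u⁆ = 1
  rw [commutatorElement_def, map_mul, map_mul, map_mul, map_inv, h3, map_inv, mul_inv_cancel]

/-! ### Quasi-primitive representations of dimension two -/

/-- The group `SL(2, 3)`, of order `24`. -/
abbrev SLTwoThree : Type := Matrix.SpecialLinearGroup (Fin 2) (ZMod 3)

/-- `SL(2, 3)` has derived length at most `3`: there is an explicit homomorphism `φ` to `ZMod 3`,
and the elements of its kernel (the quaternion group) commute with each other up to sign. -/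
theorem derivedSeries_SL_two_three :
    derivedSeries SLTwoThree 3 = ⊥ := by
  have hφ : ∀ a b c d : ZMod 3, a * d - b * c = 1 → ∀ x y z t : ZMod 3, x * t - y * z = 1 →
      (1 - (c * x + d * z) ^ 2) * ((a * y + b * t) * (c * y + d * t)) +
        (c * x + d * z) * ((a * x + b * z) + (c * y + d * t)) =
      ((1 - c ^ 2) * (b * d) + c * (a + d)) + ((1 - z ^ 2) * (y * t) + z * (x + t)) := by
    decide +kernel
  have hcomm : ∀ a b c d : ZMod 3, a * d - b * c = 1 → (1 - c ^ 2) * (b * d) + c * (a + d) = 0 →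
      ∀ x y z t : ZMod 3, x * t - y * z = 1 → (1 - z ^ 2) * (y * t) + z * (x + t) = 0 →
      (a * x + b * z = x * a + y * c ∧ a * y + b * t = x * b + y * d ∧
        c * x + d * z = z * a + t * c ∧ c * y + d * t = z * b + t * d) ∨
      (a * x + b * z = -(x * a + y * c) ∧ a * y + b * t = -(x * b + y * d) ∧
        c * x + d * z = -(z * a + t * c) ∧ c * y + d * t = -(z * b + t * d)) := by
    decide +kernel
  have hdet : ∀ A : SLTwoThree, A.1 0 0 * A.1 1 1 - A.1 0 1 * A.1 1 0 = 1 := fun A => by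
    rw [← Matrix.det_fin_two]; exact A.2
  have hmul : ∀ (A B : SLTwoThree) (i j : Fin 2),
      (A * B).1 i j = A.1 i 0 * B.1 0 j + A.1 i 1 * B.1 1 j := fun A B i j => by
    change (A.1 * B.1) i j = _
    rw [Matrix.mul_apply, Fin.sum_univ_two]
  let φ : SLTwoThree →* Multiplicative (ZMod 3) := MonoidHom.mk' (fun A => Multiplicative.ofAdd
    ((1 - A.1 1 0 ^ 2) * (A.1 0 1 * A.1 1 1) + A.1 1 0 * (A.1 0 0 + A.1 1 1))) (by
      intro A B
      rw [← ofAdd_add, ← hφ _ _ _ _ (hdet A) _ _ _ _ (hdet B), hmul, hmul, hmul, hmul])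
  have h1 : derivedSeries SLTwoThree 1 ≤ φ.ker :=
    derivedSeries_succ_le_of_comm φ (N := ⊤) (d := 0) le_top fun g _ k _ => mul_comm _ _
  have h2 : derivedSeries SLTwoThree 2 ≤ Subgroup.center SLTwoThree := by
    change ⁅derivedSeries SLTwoThree 1, derivedSeries SLTwoThree 1⁆ ≤ _
    rw [Subgroup.commutator_le]
    intro A hA B hB
    have hA' : (1 - A.1 1 0 ^ 2) * (A.1 0 1 * A.1 1 1) + A.1 1 0 * (A.1 0 0 + A.1 1 1) = 0 :=
      congrArg Multiplicative.toAdd (h1 hA)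
    have hB' : (1 - B.1 1 0 ^ 2) * (B.1 0 1 * B.1 1 1) + B.1 1 0 * (B.1 0 0 + B.1 1 1) = 0 :=
      congrArg Multiplicative.toAdd (h1 hB)
    have hpm : A * B = B * A ∨ A * B = -(B * A) := by
      refine (hcomm _ _ _ _ (hdet A) hA' _ _ _ _ (hdet B) hB').imp ?_ ?_ <;>
      · rintro ⟨h00, h01, h10, h11⟩
        apply Subtype.ext
        ext i j
        try change _ = -((B * A).1 i j)
        rw [hmul, hmul]
        fin_cases i <;> fin_cases j <;> assumption
    have hc : ⁅A, B⁆ = A * B * (B * A)⁻¹ := by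
      rw [commutatorElement_def, mul_inv_rev, ← mul_assoc]
    rcases hpm with h | h
    · rw [hc, h, mul_inv_cancel]; exact one_mem _
    · rw [hc, h, Subgroup.mem_center_iff]
      intro X
      rw [neg_mul, mul_inv_cancel, neg_mul, mul_neg, one_mul, mul_one]
  have h3 := derivedSeries_succ_le_of_comm (MonoidHom.id SLTwoThree) h2 fun g hg k _ =>
    (Subgroup.mem_center_iff.1 hg k).symm
  rwa [MonoidHom.ker_id, le_bot_iff] at h3

/-- A bound on the derived length of the image of `ψ` also bounds that of any smaller image. -/
theorem derivedSeries_le_ker_of_range_le {N A M : Type*} [Group N] [Group A] [Group M]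
    (φ : N →* M) (ψ : A →* M) (h : φ.range ≤ ψ.range) {d : ℕ} (hψ : derivedSeries A d ≤ ψ.ker) :
    derivedSeries N d ≤ φ.ker := by
  intro g hg
  have h1 := map_derivedSeries_le_derivedSeries
    ((Subgroup.inclusion h).comp φ.rangeRestrict) d ⟨g, hg, rfl⟩
  obtain ⟨x, hx, hxg⟩ := derivedSeries_le_map_derivedSeries ψ.rangeRestrict_surjective d h1
  have h2 := congrArg Subtype.val hxg
  exact h2.symm.trans (hψ hx)

section
variable {K : Type w} [Field K] {G : Type u} [Group G] {V : Type v} [AddCommGroup V] [Module K V]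
  [FiniteDimensional K V]

theorem commute_of_form_eq_one {ρ : Representation K G V} {E : Subgroup G}
    {B : E →* E →* Kˣ} (hB : ∀ g h : E, ρ g * ρ h = (B g h : K) • (ρ h * ρ g)) {g h : E}
    (h1 : B g h = 1) : Commute (ρ g) (ρ h) := by
  have := hB g h
  rwa [h1, Units.val_one, one_smul] at this

theorem form_eq_one_of_commute [Nontrivial V] {ρ : Representation K G V} {E : Subgroup G}
    {B : E →* E →* Kˣ} (hB : ∀ g h : E, ρ g * ρ h = (B g h : K) • (ρ h * ρ g)) {g h : E}
    (h1 : Commute (ρ g) (ρ h)) : B g h = 1 := by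
  have := hB g h
  rw [h1.eq, ← map_mul] at this
  exact Units.ext (smul_rep_injective ρ ((one_smul K _).trans this)).symm

theorem commute_of_mem_scalarSubgroup {ρ : Representation K G V} {z : G}
    (hz : z ∈ scalarSubgroup ρ) (T : End K V) : Commute (ρ z) T := by
  obtain ⟨c, hc⟩ := hz
  rw [hc]
  exact (Commute.one_left T).smul_left c

theorem commute_of_mul_right {ρ : Representation K G V} {x u t : G} (h : Commute (ρ x) (ρ (u * t)))
    (ht : Commute (ρ x) (ρ t)) : Commute (ρ x) (ρ u) := by
  have h1 : ρ u = ρ (u * t) * ρ t⁻¹ := by rw [← map_mul, mul_inv_cancel_right]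
  have h2 : Commute (ρ x) (ρ t⁻¹) := by
    change _ = _
    calc ρ x * ρ t⁻¹ = ρ t⁻¹ * (ρ t * ρ x) * ρ t⁻¹ := by
          rw [← mul_assoc, rep_inv_mul, one_mul]
      _ = ρ t⁻¹ * ρ x := by rw [← ht.eq, mul_assoc, mul_assoc, rep_mul_inv, mul_one]
  rw [h1]
  exact h.mul_right h2

theorem pow_fin_injective {M : Type*} [Monoid M] {x : M} {l : ℕ} (hl : l.Prime) (hx : x ^ l = 1)
    (h1 : x ≠ 1) {i j : Fin l} (h : x ^ (i : ℕ) = x ^ (j : ℕ)) : i = j := by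
  have : Fact l.Prime := ⟨hl⟩
  have ho := orderOf_eq_prime hx h1
  exact Fin.ext (pow_injOn_Iio_orderOf (by simp [ho]) (by simp [ho]) h)

/-- In prime dimension `l`, the `l ^ 2` products `e ^ i * f ^ j` of a hyperbolic pair have distinct
characters, so only scalars commute with `e` and `f`. -/
theorem mem_scalarSubgroup_of_comm_pair [Nontrivial V] {ρ : Representation K G V} {E : Subgroup G}
    {B : E →* E →* Kˣ} (hB : ∀ g h : E, ρ g * ρ h = (B g h : K) • (ρ h * ρ g)) {l : ℕ}
    (hl : l.Prime) (hBl : ∀ g h, B g h ^ l = 1) (hV : finrank K V = l) {e f : E} (hef : B e f ≠ 1)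
    {g : G} (hge : Commute (ρ g) (ρ e)) (hgf : Commute (ρ g) (ρ f)) : g ∈ scalarSubgroup ρ := by
  have hfe : B f e ≠ 1 := by rw [form_swap hB, Ne, inv_eq_one]; exact hef
  refine mem_scalarSubgroup_of_comm_family hB (ι := Fin l × Fin l)
    (u := fun i => e ^ (i.1 : ℕ) * f ^ (i.2 : ℕ)) ?_ ?_ ?_
  · intro i j hij
    have h1 := DFunLike.congr_fun hij f
    have h2 := DFunLike.congr_fun hij e
    simp only [map_mul, map_pow, MonoidHom.mul_apply, MonoidHom.pow_apply, form_self hB, one_pow,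
      mul_one, one_mul] at h1 h2
    exact Prod.ext (pow_fin_injective hl (hBl _ _) hef h1) (pow_fin_injective hl (hBl _ _) hfe h2)
  · rw [Fintype.card_prod, Fintype.card_fin, hV, sq]
  · intro i
    rw [Subgroup.coe_mul, Subgroup.coe_pow, Subgroup.coe_pow, map_mul, map_pow, map_pow]
    exact (hge.pow_right _).mul_right (hgf.pow_right _)

/-- In dimension `4`, only scalars commute with two orthogonal hyperbolic pairs: their `16` products
have distinct characters. -/
theorem mem_scalarSubgroup_of_comm_two_pairs [Nontrivial V] {ρ : Representation K G V}
    {E : Subgroup G}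
    {B : E →* E →* Kˣ} (hB : ∀ g h : E, ρ g * ρ h = (B g h : K) • (ρ h * ρ g))
    (hB2 : ∀ g h, B g h ^ 2 = 1) (hV : finrank K V = 4) {e f e' f' : E} (hef : B e f ≠ 1)
    (hef' : B e' f' ≠ 1) (h1 : B e' e = 1) (h2 : B e' f = 1) (h3 : B f' e = 1) (h4 : B f' f = 1)
    {g : G} (hge : Commute (ρ g) (ρ e)) (hgf : Commute (ρ g) (ρ f))
    (hge' : Commute (ρ g) (ρ e')) (hgf' : Commute (ρ g) (ρ f')) : g ∈ scalarSubgroup ρ := by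
  have hfe : B f e ≠ 1 := by rw [form_swap hB, Ne, inv_eq_one]; exact hef
  have hfe' : B f' e' ≠ 1 := by rw [form_swap hB, Ne, inv_eq_one]; exact hef'
  have h1' : B e e' = 1 := by rw [form_swap hB, h1, inv_one]
  have h2' : B f e' = 1 := by rw [form_swap hB, h2, inv_one]
  have h3' : B e f' = 1 := by rw [form_swap hB, h3, inv_one]
  have h4' : B f f' = 1 := by rw [form_swap hB, h4, inv_one]
  refine mem_scalarSubgroup_of_comm_family hB (ι := (Fin 2 × Fin 2) × (Fin 2 × Fin 2))
    (u := fun i => e ^ (i.1.1 : ℕ) * f ^ (i.1.2 : ℕ) * (e' ^ (i.2.1 : ℕ) * f' ^ (i.2.2 : ℕ)))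
    ?_ ?_ ?_
  · intro i j hij
    have k1 := DFunLike.congr_fun hij f
    have k2 := DFunLike.congr_fun hij e
    have k3 := DFunLike.congr_fun hij f'
    have k4 := DFunLike.congr_fun hij e'
    simp only [map_mul, map_pow, MonoidHom.mul_apply, MonoidHom.pow_apply, form_self hB, one_pow,
      mul_one, one_mul, h1, h2, h3, h4, h1', h2', h3', h4'] at k1 k2 k3 k4
    exact Prod.ext
      (Prod.ext (pow_fin_injective Nat.prime_two (hB2 _ _) hef k1)
        (pow_fin_injective Nat.prime_two (hB2 _ _) hfe k2))
      (Prod.ext (pow_fin_injective Nat.prime_two (hB2 _ _) hef' k3)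
        (pow_fin_injective Nat.prime_two (hB2 _ _) hfe' k4))
  · rw [hV]; rfl
  · intro i
    simp only [Subgroup.coe_mul, Subgroup.coe_pow, map_mul, map_pow]
    exact ((hge.pow_right _).mul_right (hgf.pow_right _)).mul_right
      ((hge'.pow_right _).mul_right (hgf'.pow_right _))

/-- If `m` elements `t i` of `E` detect triviality modulo scalars through the form, then `E` modulo
scalars has at most `2 ^ m` elements, and the term `m` of the derived series acts trivially on it.
-/
theorem commutator_mem_of_detecting [Nontrivial V] [Group.IsSolvable G]
    {ρ : Representation K G V} {E : Subgroup G} (hE : E.Normal)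
    {B : E →* E →* Kˣ} (hB : ∀ g h : E, ρ g * ρ h = (B g h : K) • (ρ h * ρ g))
    (hsq : ∀ g : E, (g : G) ^ 2 ∈ scalarSubgroup ρ)
    (hB2 : ∀ g h, B g h ^ 2 = 1) {m : ℕ} (hm : m ≤ 4) (t : Fin m → E)
    (ht : ∀ u : E, (∀ i, B u (t i) = 1) → (u : G) ∈ scalarSubgroup ρ) :
    ∀ g ∈ derivedSeries G m, ∀ u ∈ E, ⁅g, u⁆ ∈ scalarSubgroup ρ := by
  refine commutator_mem_of_card_le (X := Fin m → rootsOfUnity 2 K)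
    (fun g hg h hh => commutator_mem_scalarSubgroup ρ (hB ⟨g, hg⟩ ⟨h, hh⟩))
    (fun g hg => hsq ⟨g, hg⟩) (fun u i => ⟨B u (t i), (mem_rootsOfUnity _ _).2 (hB2 _ _)⟩) ?_ hm ?_
  · intro u v huv
    refine ht (u⁻¹ * v) fun i => ?_
    have := congrArg Subtype.val (congrFun huv i)
    change B u (t i) = B v (t i) at this
    rw [map_mul, map_inv, MonoidHom.mul_apply, MonoidHom.inv_apply, this, inv_mul_cancel]
  · rw [Nat.card_fun, Nat.card_fin]
    refine Nat.pow_le_pow_left ?_ m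
    exact card_rootsOfUnity K 2

/-- Here `E` modulo scalars is `𝔽₂ ^ 2`, on which the action has derived length at most `2`. -/
theorem prim_two [Nontrivial V] [Group.IsSolvable G] {ρ : Representation K G V}
    (hV : finrank K V = 2) (hρ : IsQuasiprimitiveLike ρ) (hZ : scalarSubgroup ρ ≠ ⊤) :
    derivedSeries G 4 ≤ ρ.ker := by
  obtain ⟨E, B, hE, hB, hsq, hB2, -, e, f, hef⟩ := exists_symplectic (l := 2) (k := 1) hρ hZ hV
  have key : ∀ g : G, Commute (ρ g) (ρ e) → Commute (ρ g) (ρ f) → g ∈ scalarSubgroup ρ :=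
    fun g => mem_scalarSubgroup_of_comm_pair hB Nat.prime_two hB2 hV hef
  refine derivedSeries_le_ker_of_centralizer ρ E (k := 2)
    (fun g hg => key g (hg e e.2) (hg f f.2)) ?_
  exact commutator_mem_of_detecting hE hB hsq hB2 (by norm_num) ![e, f] fun u hu =>
    key u (commute_of_form_eq_one hB (hu 0)) (commute_of_form_eq_one hB (hu 1))

/-- An element that commutes with a hyperbolic pair `e, f` up to scalars, which are then signs,
commutes with it exactly after multiplication by one of `1, e, f, e * f`. -/
theorem exists_adjust [Nontrivial V] {ρ : Representation K G V} {E : Subgroup G}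
    {B : E →* E →* Kˣ} (hB : ∀ g h : E, ρ g * ρ h = (B g h : K) • (ρ h * ρ g))
    (hsq : ∀ g : E, (g : G) ^ 2 ∈ scalarSubgroup ρ) (hB2 : ∀ g h, B g h ^ 2 = 1)
    {e f : E} (hef : B e f ≠ 1) {g : G} (hge : ⁅g, (e : G)⁆ ∈ scalarSubgroup ρ)
    (hgf : ⁅g, (f : G)⁆ ∈ scalarSubgroup ρ) :
    ∃ t : E, (t = 1 ∨ t = e ∨ t = f ∨ t = e * f) ∧ Commute (ρ (g * t)) (ρ e) ∧
      Commute (ρ (g * t)) (ρ f) := by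
  have hfe : B f e ≠ 1 := by rw [form_swap hB, Ne, inv_eq_one]; exact hef
  have hneg : ∀ x : Kˣ, x ^ 2 = 1 → x ≠ 1 → x = -1 := by
    intro x hx h1
    have h2 := congrArg Units.val hx
    rw [Units.val_pow_eq_pow_val, Units.val_one, sq_eq_one_iff] at h2
    exact Units.ext (h2.resolve_left fun h => h1 (Units.ext h))
  have hscal : ∀ (h : E) (c : Kˣ), ρ g * ρ h = (c : K) • (ρ h * ρ g) → c ^ 2 = 1 := by
    intro h c hc
    have h1 : ρ g * ρ ((h : G) ^ 2) = ((c ^ 2 : Kˣ) : K) • (ρ ((h : G) ^ 2) * ρ g) := by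
      rw [map_pow, sq, ← mul_assoc, hc, smul_mul_assoc, mul_assoc, hc, mul_smul_comm, smul_smul,
        ← mul_assoc, Units.val_pow_eq_pow_val, sq]
    rw [← (commute_of_mem_scalarSubgroup (hsq h) (ρ g)).eq, ← map_mul] at h1
    exact Units.ext (smul_rep_injective ρ ((one_smul K _).trans h1)).symm
  have hmul : ∀ (t h : E) (c : Kˣ), ρ g * ρ h = (c : K) • (ρ h * ρ g) →
      ρ (g * t) * ρ h = ((c * B t h : Kˣ) : K) • (ρ h * ρ (g * t)) := by
    intro t h c hc
    rw [map_mul, mul_assoc, hB, mul_smul_comm, ← mul_assoc, hc, smul_mul_assoc, smul_smul,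
      mul_assoc, Units.val_mul, mul_comm (c : K)]
  obtain ⟨c, hc⟩ := exists_commutator_scalar ρ hge
  obtain ⟨d, hd⟩ := exists_commutator_scalar ρ hgf
  have hefv := hneg _ (hB2 _ _) hef
  have hfev := hneg _ (hB2 _ _) hfe
  have finish : ∀ t : E, c * B t e = 1 → d * B t f = 1 →
      Commute (ρ (g * t)) (ρ e) ∧ Commute (ρ (g * t)) (ρ f) := by
    intro t h1 h2
    have k1 := hmul t e c hc
    have k2 := hmul t f d hd
    rw [h1, Units.val_one, one_smul] at k1
    rw [h2, Units.val_one, one_smul] at k2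
    exact ⟨k1, k2⟩
  by_cases hc1 : c = 1 <;> by_cases hd1 : d = 1
  · exact ⟨1, by simp, finish 1 (by simp [hc1]) (by simp [hd1])⟩
  · have hd1 := hneg d (hscal f d hd) hd1
    exact ⟨e, by simp, finish e (by simp [hc1, form_self hB]) (by simp [hd1, hefv])⟩
  · have hc1 := hneg c (hscal e c hc) hc1
    exact ⟨f, by simp, finish f (by simp [hc1, hfev]) (by simp [hd1, form_self hB])⟩
  · have hd1 := hneg d (hscal f d hd) hd1
    have hc1 := hneg c (hscal e c hc) hc1
    exact ⟨e * f, by simp, finish (e * f) (by simp [hc1, hfev, form_self hB])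
      (by simp [hd1, hefv, form_self hB])⟩
end

/-! ### Quasi-primitive representations of dimension three -/

section
variable {K : Type w} [Field K] {G : Type u} [Group G] {V : Type v} [AddCommGroup V] [Module K V]
  [FiniteDimensional K V]

/-- Here `E` modulo scalars is `𝔽₃ ^ 2` with its symplectic form, and `G` acts on it through
`SL(2, 3)`. -/
theorem prim_three [Nontrivial V] [Group.IsSolvable G] {ρ : Representation K G V}
    (hV : finrank K V = 3) (hρ : IsQuasiprimitiveLike ρ) (hZ : scalarSubgroup ρ ≠ ⊤) :
    derivedSeries G 5 ≤ ρ.ker := by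
  obtain ⟨E, B, hE, hB, -, hB3, -, e, f, hef⟩ := exists_symplectic (l := 3) (k := 1) hρ hZ hV
  have key : ∀ g : G, Commute (ρ g) (ρ e) → Commute (ρ g) (ρ f) → g ∈ scalarSubgroup ρ :=
    fun g => mem_scalarSubgroup_of_comm_pair hB Nat.prime_three hB3 hV hef
  refine derivedSeries_le_ker_of_centralizer ρ E (k := 3)
    (fun g hg => key g (hg e e.2) (hg f f.2)) ?_
  have : Fact (Nat.Prime 3) := ⟨Nat.prime_three⟩
  -- `a` and `b` will be the coordinates on `E` modulo scalars in the symplectic basis `e, f`; they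
  -- are read off from the form through the isomorphism `χ` of `ZMod 3` with the cube roots of unity
  let χ : AddChar (ZMod 3) Kˣ := AddChar.zmodChar 3 (hB3 e f)
  have hχ1 : χ 1 = B e f := by
    rw [AddChar.zmodChar_apply]; exact pow_one _
  have hχinj : Function.Injective χ := by
    intro i j hij
    rw [AddChar.zmodChar_apply, AddChar.zmodChar_apply] at hij
    exact pow_fin_injective Nat.prime_three (hB3 e f) hef hij
  have hχsurj : ∀ x : Kˣ, x ^ 3 = 1 → ∃ i, χ i = x := by
    intro x hx
    have hprim : IsPrimitiveRoot (B e f : K) 3 := by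
      have := IsPrimitiveRoot.orderOf (B e f)
      rw [orderOf_eq_prime (hB3 e f) hef] at this
      exact IsPrimitiveRoot.coe_units_iff.2 this
    obtain ⟨i, -, hi⟩ := hprim.eq_pow_of_pow_eq_one (ξ := (x : K))
      (by rw [← Units.val_pow_eq_pow_val, hx, Units.val_one])
    refine ⟨i, Units.ext ?_⟩
    rw [AddChar.zmodChar_apply', Units.val_pow_eq_pow_val, hi]
  have hχpow : ∀ x y : ZMod 3, χ x ^ y.val = χ (y * x) := by
    intro x y
    rw [← AddChar.map_nsmul_eq_pow, nsmul_eq_mul, ZMod.natCast_val, ZMod.cast_id]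
  choose a ha using fun u : E => hχsurj (B u f) (hB3 u f)
  choose b hb using fun u : E => hχsurj (B e u) (hB3 e u)
  have ha_mul : ∀ u v, a (u * v) = a u + a v := by
    intro u v
    apply hχinj
    rw [ha, AddChar.map_add_eq_mul, ha, ha, map_mul, MonoidHom.mul_apply]
  have hb_mul : ∀ u v, b (u * v) = b u + b v := by
    intro u v
    apply hχinj
    rw [hb, AddChar.map_add_eq_mul, hb, hb, map_mul]
  have ha_pow : ∀ u (y : ZMod 3), a (u ^ y.val) = y * a u := by
    intro u y
    apply hχinj
    rw [ha, map_pow, MonoidHom.pow_apply, ← ha, hχpow]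
  have hb_pow : ∀ u (y : ZMod 3), b (u ^ y.val) = y * b u := by
    intro u y
    apply hχinj
    rw [hb, map_pow, ← hb, hχpow]
  have hae : a e = 1 := hχinj (by rw [ha, hχ1])
  have hbf : b f = 1 := hχinj (by rw [hb, hχ1])
  have haf : a f = 0 := hχinj (by rw [ha, form_self hB, AddChar.map_zero_eq_one])
  have hbe : b e = 0 := hχinj (by rw [hb, form_self hB, AddChar.map_zero_eq_one])
  have hmemZ : ∀ u : E, a u = 0 → b u = 0 → (u : G) ∈ scalarSubgroup ρ := by
    intro u h1 h2
    refine key u (commute_of_form_eq_one hB ?_) (commute_of_form_eq_one hB ?_)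
    · rw [form_swap hB, ← hb, h2, AddChar.map_zero_eq_one, inv_one]
    · rw [← ha, h1, AddChar.map_zero_eq_one]
  have hZform : ∀ u v : E, (u : G) ∈ scalarSubgroup ρ → B u v = 1 := fun u v hu =>
    form_eq_one_of_commute hB (commute_of_mem_scalarSubgroup hu _)
  have hZform' : ∀ u v : E, (u : G) ∈ scalarSubgroup ρ → B v u = 1 := fun u v hu => by
    rw [form_swap hB, hZform u v hu, inv_one]
  have hdec : ∀ u : E, ∃ z : E, (z : G) ∈ scalarSubgroup ρ ∧
      u = z * (e ^ (a u).val * f ^ (b u).val) := by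
    intro u
    refine ⟨u * (e ^ (a u).val * f ^ (b u).val)⁻¹, hmemZ _ ?_ ?_, by group⟩
    · have := ha_mul (u * (e ^ (a u).val * f ^ (b u).val)⁻¹) (e ^ (a u).val * f ^ (b u).val)
      rw [inv_mul_cancel_right, ha_mul (e ^ _), ha_pow, ha_pow, hae, haf] at this
      simpa only [mul_one, mul_zero, add_zero, zero_add, right_eq_add] using this
    · have := hb_mul (u * (e ^ (a u).val * f ^ (b u).val)⁻¹) (e ^ (a u).val * f ^ (b u).val)
      rw [inv_mul_cancel_right, hb_mul (e ^ _), hb_pow, hb_pow, hbe, hbf] at this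
      simpa only [mul_one, mul_zero, add_zero, zero_add, right_eq_add] using this
  have hform : ∀ u v, B u v = χ (a u * b v - b u * a v) := by
    intro u v
    obtain ⟨z, hz, hu⟩ := hdec u
    have : B u v = B e v ^ (a u).val * B f v ^ (b u).val := by
      conv_lhs => rw [hu]
      simp only [map_mul, map_pow, MonoidHom.mul_apply, MonoidHom.pow_apply, hZform z v hz, one_mul]
    rw [this, form_swap hB v f, ← ha, ← hb, ← AddChar.map_neg_eq_inv, hχpow, hχpow,
      ← AddChar.map_add_eq_mul]
    congr 1
    ring
  let c : G → E ≃* E := fun g => MulAut.conjNormal g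
  have hcval : ∀ g (u : E), ((c g u : E) : G) = g * u * g⁻¹ := fun g u =>
    MulAut.conjNormal_apply g u
  have hcZ : ∀ g (z : E), (z : G) ∈ scalarSubgroup ρ → ((c g z : E) : G) ∈ scalarSubgroup ρ := by
    intro g z hz
    rw [hcval]
    exact (scalarSubgroup_normal ρ).conj_mem _ hz g
  have hac : ∀ g u, a (c g u) = a (c g e) * a u + a (c g f) * b u := by
    intro g u
    obtain ⟨z, hz, hu⟩ := hdec u
    have h0 : a (c g z) = 0 := hχinj (by
      rw [ha, hZform _ _ (hcZ g z hz), AddChar.map_zero_eq_one])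
    conv_lhs => rw [hu]
    rw [map_mul, map_mul, map_pow, map_pow, ha_mul, ha_mul, ha_pow, ha_pow, h0]
    ring
  have hbc : ∀ g u, b (c g u) = b (c g e) * a u + b (c g f) * b u := by
    intro g u
    obtain ⟨z, hz, hu⟩ := hdec u
    have h0 : b (c g z) = 0 := hχinj (by
      rw [hb, hZform' _ _ (hcZ g z hz), AddChar.map_zero_eq_one])
    conv_lhs => rw [hu]
    rw [map_mul, map_mul, map_pow, map_pow, hb_mul, hb_mul, hb_pow, hb_pow, h0]
    ring
  have hcform : ∀ g u v, B (c g u) (c g v) = B u v := by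
    intro g u v
    have h1 := hB (c g u) (c g v)
    have h2 := congrArg (fun T => ρ g * T * ρ g⁻¹) (hB u v)
    simp only [mul_smul_comm, smul_mul_assoc, ← map_mul, hcval] at h1 h2
    have e1 : g * u * g⁻¹ * (g * v * g⁻¹) = g * (u * v) * g⁻¹ := by group
    have e2 : g * v * g⁻¹ * (g * u * g⁻¹) = g * (v * u) * g⁻¹ := by group
    rw [e1, e2, h2] at h1
    exact Units.ext (smul_rep_injective ρ h1).symm
  -- the matrix of conjugation by `g` in the basis `e, f`; its determinant is `1` since the form is
  -- invariant under conjugation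
  let M : G →* SLTwoThree := MonoidHom.mk' (fun g =>
      ⟨!![a (c g e), a (c g f); b (c g e), b (c g f)], by
        rw [Matrix.det_fin_two_of]
        apply hχinj
        rw [mul_comm (a (c g f)), ← hform, hcform, hχ1]⟩) (by
    intro g h
    apply Subtype.ext
    change _ = !![a (c g e), a (c g f); b (c g e), b (c g f)] *
      !![a (c h e), a (c h f); b (c h e), b (c h f)]
    have hcc : ∀ u, c (g * h) u = c g (c h u) := fun u => by
      simp only [c, map_mul, MulAut.mul_apply]
    rw [Matrix.mul_fin_two, ← hac, ← hac, ← hbc, ← hbc, ← hcc, ← hcc])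
  intro g hg u hu
  have h1 := map_derivedSeries_le_derivedSeries M 3 ⟨g, hg, rfl⟩
  rw [derivedSeries_SL_two_three, Subgroup.mem_bot] at h1
  have h2 : !![a (c g e), a (c g f); b (c g e), b (c g f)] =
      (1 : Matrix (Fin 2) (Fin 2) (ZMod 3)) :=
    congrArg Subtype.val h1
  have m00 : a (c g e) = 1 := congrFun (congrFun h2 0) 0
  have m01 : a (c g f) = 0 := congrFun (congrFun h2 0) 1
  have m10 : b (c g e) = 0 := congrFun (congrFun h2 1) 0
  have m11 : b (c g f) = 1 := congrFun (congrFun h2 1) 1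
  have h3 := hmemZ (c g ⟨u, hu⟩ * ⟨u, hu⟩⁻¹) ?_ ?_
  · rw [Subgroup.coe_mul, hcval] at h3
    exact h3
  · have := ha_mul (c g ⟨u, hu⟩ * ⟨u, hu⟩⁻¹) ⟨u, hu⟩
    rw [inv_mul_cancel_right, hac, m00, m01] at this
    simpa using this
  · have := hb_mul (c g ⟨u, hu⟩ * ⟨u, hu⟩⁻¹) ⟨u, hu⟩
    rw [inv_mul_cancel_right, hbc, m10, m11] at this
    simpa using this
end

/-! ### Quasi-primitive representations of dimension four, and the bound in general -/

section
variable {K : Type w} [Field K] {G : Type u} [Group G] {V : Type v} [AddCommGroup V] [Module K V]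
  [FiniteDimensional K V]

/-- If `e` and `f` anticommute and `e ^ 2` is a scalar `μ ^ 2`, then `f` exchanges the eigenspaces
of `e` for `μ` and `-μ`, which therefore both have dimension two. A subgroup `C` commuting with `e`
preserves them, so a bound in dimension two applies to `C`. -/
theorem derivedSeries_le_ker_of_two_eigenspaces [IsAlgClosed K] [Nontrivial V]
    (ρ : Representation K G V) (hV : finrank K V = 4) (C : Subgroup G) {e f : G}
    (he : e ^ 2 ∈ scalarSubgroup ρ) (hef : ρ e * ρ f = -(ρ f * ρ e)) (h2 : (2 : K) ≠ 0)
    (hC : ∀ g ∈ C, Commute (ρ g) (ρ e)) {d : ℕ}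
    (IH : ∀ (W : Type v) [AddCommGroup W] [Module K W] [FiniteDimensional K W]
      (σ : Representation K C W), finrank K W ≤ 2 → derivedSeries C d ≤ σ.ker) :
    derivedSeries C d ≤ (ρ.comp C.subtype).ker := by
  obtain ⟨c, hc⟩ := he
  obtain ⟨μ, hμ⟩ := IsAlgClosed.exists_pow_nat_eq c (n := 2) (by norm_num)
  have hc0 : c ≠ 0 := by
    rintro rfl
    rw [zero_smul] at hc
    exact rep_ne_zero ρ _ hc
  have hμ0 : μ ≠ 0 := by
    rintro rfl
    exact hc0 (by rw [← hμ]; norm_num)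
  have hee : ∀ v, ρ e (ρ e v) = μ ^ 2 • v := by
    intro v
    rw [← Module.End.mul_apply, ← sq, ← map_pow, hc, hμ]; rfl
  have hef' : ∀ v, ρ e (ρ f v) = -ρ f (ρ e v) := fun v => LinearMap.congr_fun hef v
  let W : K → Submodule K V := fun ν => End.eigenspace (ρ e) ν
  have hW : ∀ ν v, v ∈ W ν ↔ ρ e v = ν • v := fun ν v => End.mem_eigenspace_iff
  have hmap : ∀ ν, finrank K (W ν) ≤ finrank K (W (-ν)) := by
    intro ν
    have hinj : Function.Injective (ρ f) := by
      intro x y hxy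
      have := congrArg (ρ f⁻¹) hxy
      simpa using this
    rw [(Submodule.equivMapOfInjective (ρ f) hinj (W ν)).finrank_eq]
    apply Submodule.finrank_mono
    rintro _ ⟨v, hv, rfl⟩
    rw [SetLike.mem_coe, hW] at hv
    rw [hW, hef', hv, map_smul, neg_smul]
  have hdisj : Disjoint (W μ) (W (-μ)) := by
    rw [Submodule.disjoint_def]
    intro v hv hv'
    rw [hW] at hv hv'
    rw [hv, neg_smul, ← add_eq_zero_iff_eq_neg, ← two_smul K, smul_smul] at hv'
    exact (smul_eq_zero.1 hv').resolve_left (mul_ne_zero h2 hμ0)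
  have hsum := Submodule.finrank_add_finrank_le_of_disjoint hdisj
  have hd1 := hmap μ
  have hd2 := hmap (-μ)
  rw [neg_neg] at hd2
  have hinv : ∀ ν (g : C), W ν ≤ (W ν).comap (ρ.comp C.subtype g) := by
    intro ν g v hv
    rw [hW] at hv
    rw [Submodule.mem_comap, hW]
    have := LinearMap.congr_fun (hC g g.2).eq v
    change ρ g (ρ e v) = ρ e (ρ g v) at this
    change ρ e (ρ g v) = ν • ρ g v
    rw [← this, hv, map_smul]
  have hfix : ∀ ν, finrank K (W ν) ≤ 2 → ∀ g ∈ derivedSeries C d, ∀ v ∈ W ν, ρ g v = v := by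
    intro ν hν g hg v hv
    have h1 := IH (W ν) (Representation.subrepresentation (ρ.comp C.subtype) (W ν) (hinv ν)) hν hg
    exact congrArg Subtype.val (LinearMap.congr_fun h1 ⟨v, hv⟩)
  intro g hg
  ext v
  change ρ g v = v
  have hp : ρ e v + μ • v ∈ W μ := by
    rw [hW, map_add, hee, map_smul, smul_add, smul_smul, sq, add_comm]
  have hm : ρ e v - μ • v ∈ W (-μ) := by
    rw [hW, map_sub, hee, map_smul, smul_sub, smul_smul, neg_smul, neg_mul, neg_smul, sq]
    abel
  have hv : v = (2 * μ)⁻¹ • ((ρ e v + μ • v) - (ρ e v - μ • v)) := by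
    rw [add_sub_sub_cancel, ← two_smul K, smul_smul, smul_smul, mul_assoc,
      inv_mul_cancel₀, one_smul]
    exact mul_ne_zero h2 hμ0
  rw [hv, map_smul, map_sub, hfix μ (by omega) g hg _ hp, hfix (-μ) (by omega) g hg _ hm]

/-- Given a hyperbolic pair `e, f`, either `E` modulo scalars is generated by it or it contains a
second hyperbolic pair, orthogonal to the first. In the first case the second derived subgroup is,
up to the kernel of `ρ`, contained in the product of `E` and the centralizer `C` of `e` and `f`; in
the second case `E` modulo scalars is `𝔽₂ ^ 4`. -/
theorem prim_four [IsAlgClosed K] [Nontrivial V] [Group.IsSolvable G] {ρ : Representation K G V}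
    (hV : finrank K V = 4) (hρ : IsQuasiprimitiveLike ρ) (hZ : scalarSubgroup ρ ≠ ⊤)
    (IH : ∀ (N : Subgroup G) (W : Type v) [AddCommGroup W] [Module K W] [FiniteDimensional K W]
      (σ : Representation K N W), finrank K W ≤ 2 → derivedSeries N 4 ≤ σ.ker) :
    derivedSeries G 6 ≤ ρ.ker := by
  obtain ⟨E, B, hE, hB, hsq, hB2, hrad, e, f, hef⟩ := exists_symplectic (l := 2) (k := 2) hρ hZ hV
  have hEE : ∀ g ∈ E, ∀ h ∈ E, ⁅g, h⁆ ∈ scalarSubgroup ρ :=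
    fun g hg h hh => commutator_mem_scalarSubgroup ρ (hB ⟨g, hg⟩ ⟨h, hh⟩)
  by_cases hcase : ∀ u : E, B u e = 1 → B u f = 1 → (u : G) ∈ scalarSubgroup ρ
  · have hN := commutator_mem_of_detecting hE hB hsq hB2 (m := 2) (by norm_num) ![e, f]
      fun u hu => hcase u (hu 0) (hu 1)
    let C : Subgroup G :=
      (Subgroup.centralizer (ρ.asGroupHom '' {(e : G), (f : G)})).comap ρ.asGroupHom
    have hC : ∀ g, g ∈ C ↔ Commute (ρ g) (ρ e) ∧ Commute (ρ g) (ρ f) := by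
      intro g
      rw [Subgroup.mem_comap, Subgroup.mem_centralizer_iff]
      constructor
      · intro h
        exact ⟨(congrArg Units.val (h _ ⟨e, by simp, rfl⟩)).symm,
          (congrArg Units.val (h _ ⟨f, by simp, rfl⟩)).symm⟩
      · rintro ⟨h1, h2⟩ _ ⟨x, hx | hx, rfl⟩
        · rw [hx]; exact Units.ext h1.eq.symm
        · rw [Set.mem_singleton_iff.1 hx]; exact Units.ext h2.eq.symm
    have hneg : B e f = -1 := by
      have h2 := congrArg Units.val (hB2 e f)
      rw [Units.val_pow_eq_pow_val, Units.val_one, sq_eq_one_iff] at h2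
      exact Units.ext (h2.resolve_left fun h => hef (Units.ext h))
    have h2 : (2 : K) ≠ 0 := by
      intro h0
      apply hef
      rw [hneg]
      apply Units.ext
      rw [Units.val_neg, Units.val_one, eq_comm, ← add_eq_zero_iff_eq_neg, ← h0]
      norm_num
    have hCd : derivedSeries C 4 ≤ (ρ.comp C.subtype).ker := by
      refine derivedSeries_le_ker_of_two_eigenspaces ρ hV C (hsq e) (f := f) ?_ h2
        (fun g hg => ((hC g).1 hg).1) fun W _ _ _ σ => IH C W σ
      rw [hB, hneg, Units.val_neg, Units.val_one, neg_smul, one_smul]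
    have hEd : derivedSeries E 4 ≤ (ρ.comp E.subtype).ker := by
      refine (derivedSeries_antitone E (show 2 ≤ 4 by norm_num)).trans ?_
      refine derivedSeries_succ_le_of_comm (ρ.comp E.subtype) (d := 1)
        (N := (scalarSubgroup ρ).comap E.subtype) ?_ ?_
      · change ⁅(⊤ : Subgroup E), (⊤ : Subgroup E)⁆ ≤ _
        rw [Subgroup.commutator_le]
        intro g _ h _
        exact hEE g g.2 h h.2
      · intro g hg k _
        exact (commute_of_mem_scalarSubgroup hg _).eq
    have ht : ∀ (t : E), (t = 1 ∨ t = e ∨ t = f ∨ t = e * f) → ∀ x ∈ C, Commute (ρ x) (ρ t) := by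
      rintro t (rfl | rfl | rfl | rfl) x hx
      · rw [Subgroup.coe_one, map_one]; exact Commute.one_right _
      · exact ((hC x).1 hx).1
      · exact ((hC x).1 hx).2
      · rw [Subgroup.coe_mul, map_mul]
        exact ((hC x).1 hx).1.mul_right ((hC x).1 hx).2
    -- `E` is generated modulo scalars by `e` and `f`, so `C` centralizes all of it
    have hCE : ∀ x ∈ C, ∀ u : E, Commute (ρ x) (ρ u) := by
      intro x hx u
      obtain ⟨t, ht', h1, h2⟩ := exists_adjust hB hsq hB2 hef (hEE u u.2 e e.2) (hEE u u.2 f f.2)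
      refine commute_of_mul_right (t := t) ?_ (ht t ht' x hx)
      exact (commute_of_mem_scalarSubgroup
        (hcase (u * t) (form_eq_one_of_commute hB h1) (form_eq_one_of_commute hB h2)) _).symm
    let φE : E →* (End K V)ˣ := ρ.asGroupHom.comp E.subtype
    let φC : C →* (End K V)ˣ := ρ.asGroupHom.comp C.subtype
    let ψ : E × C →* (End K V)ˣ := φE.noncommCoprod φC fun u x =>
      Units.ext (hCE x x.2 u).eq.symm
    have hψ : derivedSeries (E × C) 4 ≤ ψ.ker := by
      intro y hy
      have k1 := hEd (map_derivedSeries_le_derivedSeries (MonoidHom.fst E C) 4 ⟨y, hy, rfl⟩)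
      have k2 := hCd (map_derivedSeries_le_derivedSeries (MonoidHom.snd E C) 4 ⟨y, hy, rfl⟩)
      have k3 : φE y.1 = 1 := Units.ext k1
      have k4 : φC y.2 = 1 := Units.ext k2
      change φE y.1 * φC y.2 = 1
      rw [k3, k4, one_mul]
    have hNd := derivedSeries_le_ker_of_range_le
      (ρ.asGroupHom.comp (derivedSeries G 2).subtype) ψ (by
        rintro _ ⟨g, rfl⟩
        obtain ⟨t, -, h1, h2⟩ := exists_adjust hB hsq hB2 hef (hN g g.2 e e.2) (hN g g.2 f f.2)
        have hx : (g : G) * t ∈ C := (hC _).2 ⟨h1, h2⟩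
        refine ⟨(t⁻¹, ⟨g * t, hx⟩), ?_⟩
        have := (hCE _ hx t⁻¹).eq
        apply Units.ext
        change ρ ((t⁻¹ : E) : G) * ρ (g * t) = ρ g
        rw [← this, ← map_mul, Subgroup.coe_inv, mul_inv_cancel_right]) hψ
    intro g hg
    obtain ⟨x, hx, rfl⟩ := derivedSeries_add_le_map le_rfl 4
      (show g ∈ derivedSeries G (2 + 4) from hg)
    exact congrArg Units.val (hNd hx)
  · push Not at hcase
    obtain ⟨d, hde, hdf, hdZ⟩ := hcase
    obtain ⟨h, hdh⟩ : ∃ h, B d h ≠ 1 := by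
      by_contra! hall
      exact hdZ (hrad d (by ext h; simp [hall]))
    -- `d` is orthogonal to `e` and `f`; `h * t` is a partner of `d` that is orthogonal to them too
    obtain ⟨t, ht, h1, h2⟩ := exists_adjust hB hsq hB2 hef (hEE h h.2 e e.2) (hEE h h.2 f f.2)
    have hdt : B d t = 1 := by
      rcases ht with rfl | rfl | rfl | rfl <;> simp [hde, hdf]
    have hdht : B d (h * t) ≠ 1 := by rwa [map_mul, hdt, mul_one]
    have key : ∀ g : G, Commute (ρ g) (ρ e) → Commute (ρ g) (ρ f) → Commute (ρ g) (ρ d) →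
        Commute (ρ g) (ρ ((h * t : E) : G)) → g ∈ scalarSubgroup ρ := fun g =>
      mem_scalarSubgroup_of_comm_two_pairs hB hB2 hV hef hdht hde hdf
        (form_eq_one_of_commute hB h1) (form_eq_one_of_commute hB h2)
    refine derivedSeries_le_ker_of_centralizer ρ E (k := 4)
      (fun g hg => key g (hg e e.2) (hg f f.2) (hg d d.2) (hg _ (h * t).2)) ?_
    exact commutator_mem_of_detecting hE hB hsq hB2 le_rfl ![e, f, d, h * t] fun u hu =>
      key u (commute_of_form_eq_one hB (hu 0)) (commute_of_form_eq_one hB (hu 1))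
        (commute_of_form_eq_one hB (hu 2)) (commute_of_form_eq_one hB (hu 3))
end

/-- The bound on the derived length in dimension `n ≤ 4`, with values `0, 1, 4, 5, 6`. -/
def lengthBound (n : ℕ) : ℕ := if n ≤ 1 then n else n + 2

theorem lengthBound_strictMono : StrictMono lengthBound := by
  apply strictMono_nat_of_lt_succ
  intro n
  unfold lengthBound
  split_ifs <;> omega

theorem derivedSeries_le_ker_linear (K : Type w) [Field K] [IsAlgClosed K] (n : ℕ)
    (hn : n ≤ 4) (G : Type u) [Group G] [Group.IsSolvable G]
    (V : Type v) [AddCommGroup V] [Module K V] [FiniteDimensional K V] (ρ : Representation K G V)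
    (hV : finrank K V ≤ n) : derivedSeries G (lengthBound n) ≤ ρ.ker := by
  induction n using Nat.strong_induction_on generalizing G V with
  | _ n IH =>
  refine derivedSeries_le_ker_step ρ lengthBound_strictMono hn hV ?_ ?_
  · intro m hm N _ i hi W _ _ _ σ hW
    have : Group.IsSolvable N := Group.isSolvable_of_isSolvable_injective hi
    exact IH m hm (by omega) N W σ hW
  · intro hVn hn2 hρ hZ
    have : Nontrivial V := by
      rw [← finrank_pos_iff (R := K)]; omega
    interval_cases n
    · exact prim_two hVn hρ hZ
    · exact prim_three hVn hρ hZ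
    · refine prim_four hVn hρ hZ fun N W _ _ _ σ hW => ?_
      exact IH 2 (by norm_num) (by norm_num) N W σ hW

theorem derivedSeries_le_ker_elementary (p : ℕ) [Fact p.Prime] (n : ℕ)
    (hn : n ≤ 4) (G : Type u) [Group G] [Group.IsSolvable G]
    (V : Type v) [AddCommGroup V] [Module (ZMod p) V] [Finite V]
    (ρ : Representation (ZMod p) G V) (hV : finrank (ZMod p) V ≤ n) :
    derivedSeries G (lengthBound n) ≤ ρ.ker :=
  derivedSeries_le_ker_of_baseChange (AlgebraicClosure (ZMod p)) ρ fun σ =>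
    derivedSeries_le_ker_linear _ n hn G _ σ (by rwa [Module.finrank_baseChange])

/-- The elementary abelian case, for an action by additive automorphisms. -/
theorem derivedSeries_le_ker_int (p : ℕ) [hp : Fact p.Prime] (n : ℕ) (hn : n ≤ 4) (G : Type u)
    [Group G] [Group.IsSolvable G] (V : Type v) [AddCommGroup V] [Module (ZMod p) V] [Finite V]
    (hV : Nat.card V = p ^ n) (ρ : Representation ℤ G V) :
    derivedSeries G (lengthBound n) ≤ ρ.ker := by
  have hdim : finrank (ZMod p) V = n := by
    rw [← FiniteField.pow_finrank_eq_natCard p V] at hV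
    exact Nat.pow_right_injective hp.out.two_le hV
  let σ : Representation (ZMod p) G V :=
    { toFun := fun g => AddMonoidHom.toZModLinearMap p (ρ g).toAddMonoidHom
      map_one' := by ext x; simp
      map_mul' := fun g h => by ext x; simp }
  intro g hg
  have h1 : σ g = 1 := derivedSeries_le_ker_elementary p n hn G V σ hdim.le hg
  ext v
  exact LinearMap.congr_fun h1 v

theorem derivedSeries_le_ker_abelian {p : ℕ} (hp : p.Prime) (n : ℕ) (hn : n ≤ 4) (G : Type u)
    [Group G] [Group.IsSolvable G] (V : Type v) [AddCommGroup V] [Finite V]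
    (hV : Nat.card V = p ^ n) (ρ : Representation ℤ G V) :
    derivedSeries G (lengthBound n) ≤ ρ.ker := by
  have : Fact p.Prime := ⟨hp⟩
  induction n using Nat.strong_induction_on generalizing V with
  | _ n IH =>
  by_cases hpV : ∀ v : V, p • v = 0
  · have : Module (ZMod p) V := AddCommGroup.zmodModule hpV
    exact derivedSeries_le_ker_int p n hn G V hV ρ
  · let W : Submodule ℤ V := LinearMap.ker (LinearMap.lsmul ℤ V (p : ℤ))
    have hW : ∀ v, v ∈ W ↔ p • v = 0 := fun v => by
      simp [W]
    have hWρ : ∀ g, W ≤ W.comap (ρ g) := by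
      intro g v hv
      rw [hW] at hv
      rw [Submodule.mem_comap, hW, ← map_nsmul, hv, map_zero]
    have hcard : Nat.card V = Nat.card W * Nat.card (V ⧸ W) :=
      Submodule.card_eq_card_quotient_mul_card W
    rw [hV] at hcard
    obtain ⟨i, hi, hWi⟩ := (Nat.dvd_prime_pow hp).1 (Dvd.intro _ hcard.symm)
    obtain ⟨j, hj, hWj⟩ := (Nat.dvd_prime_pow hp).1 (Dvd.intro_left _ hcard.symm)
    have hij : n = i + j := by
      rw [hWi, hWj, ← pow_add] at hcard
      exact Nat.pow_right_injective hp.two_le hcard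
    have hj0 : j ≠ 0 := by
      rintro rfl
      rw [pow_zero, Nat.card_eq_one_iff_unique] at hWj
      have := hWj.1
      rw [Submodule.Quotient.subsingleton_iff] at this
      exact hpV fun v => (hW v).1 (this ▸ Submodule.mem_top)
    have hi0 : i ≠ 0 := by
      rintro rfl
      have hn0 : n ≠ 0 := by omega
      have hd : p ∣ Nat.card V := hV ▸ dvd_pow_self p hn0
      obtain ⟨x, hx⟩ := exists_prime_addOrderOf_dvd_card' p hd
      have hxW : x ∈ W := (hW x).2 (hx ▸ addOrderOf_nsmul_eq_zero x)
      rw [pow_zero, Nat.card_eq_one_iff_unique] at hWi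
      have h0 : x = 0 := congrArg Subtype.val (hWi.1.elim ⟨x, hxW⟩ 0)
      rw [h0, addOrderOf_zero] at hx
      exact hp.one_lt.ne hx
    have : Finite (V ⧸ W) := Finite.of_surjective _ (Submodule.mkQ_surjective W)
    have hlt : lengthBound (n - 1) + 1 ≤ lengthBound n := lengthBound_strictMono (by omega)
    refine (derivedSeries_antitone G hlt).trans (derivedSeries_le_ker_of_submodule ρ W hWρ ?_ ?_)
    · exact (derivedSeries_antitone G (lengthBound_strictMono.monotone (by omega))).trans
        (IH i (by omega) (by omega) W hWi _)
    · exact (derivedSeries_antitone G (lengthBound_strictMono.monotone (by omega))).trans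
        (IH j (by omega) (by omega) (V ⧸ W) hWj _)

/-- Let `p` be a prime, `n ∈ {1,2,3,4}`, `P` a finite abelian group of order `pⁿ`,
and `Q` a solvable subgroup of `Aut(P)`.  Then the derived length of `Q` is at
most `1, 4, 5, 6` according as `n = 1, 2, 3, 4`  (derived length at most `d`
being expressed as `derivedSeries Q d = ⊥`). -/
theorem aut_abelian_derivedLength_bound (p : ℕ) (hp : p.Prime) (n : ℕ)
    (hn : n ∈ ({1, 2, 3, 4} : Set ℕ)) (P : Type*) [CommGroup P] [Finite P]
    (hP : Nat.card P = p ^ n) (Q : Subgroup (MulAut P)) (hQ : IsSolvable Q) :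
    (n = 1 → derivedSeries Q 1 = ⊥) ∧
    (n = 2 → derivedSeries Q 4 = ⊥) ∧
    (n = 3 → derivedSeries Q 5 = ⊥) ∧
    (n = 4 → derivedSeries Q 6 = ⊥) := by
  have hn4 : n ≤ 4 := by
    rcases hn with rfl | rfl | rfl | rfl <;> norm_num
  have hQ' : Group.IsSolvable Q := hQ
  let ρ : Representation ℤ Q (Additive P) :=
    { toFun := fun g => (MonoidHom.toAdditive (g : MulAut P).toMonoidHom).toIntLinearMap
      map_one' := by ext x; simp
      map_mul' := fun g h => by ext x; simp }
  have hle := derivedSeries_le_ker_abelian hp n hn4 Q (Additive P) hP ρ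
  have hbot : derivedSeries Q (lengthBound n) = ⊥ := by
    rw [eq_bot_iff]
    intro g hg
    rw [Subgroup.mem_bot]
    apply Subtype.ext
    ext x
    exact LinearMap.congr_fun (hle hg) (Additive.ofMul x)
  refine ⟨?_, ?_, ?_, ?_⟩ <;> rintro rfl <;> exact hbot
end
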